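/- arXiv:2508.08870 — 2 statements merged into one kernel-verified Lean document; each statement's English description precedes it below -/
import Mathlib

section
/- Let P be a finite set of n points in ℝ^d whose affine span has dimension d. Then there is a point x ∈ P such that the number of distinct lines connecting x to the other points of P is at least n·(1 − 12/d). -/
/-- The set of distinct lines connecting a point `x` to the other points of a
finite set `P` in `ℝ^d`: the affine spans of `{x, p}` for points `p ∈ P` with
`p ≠ x`. -/
def linesThrough {d : ℕ} (P : Finset (Fin d → ℝ)) (x : Fin d → ℝ) :
    Set (AffineSubspace ℝ (Fin d → ℝ)) :=
  {L | ∃ p ∈ P, p ≠ x ∧ L = affineSpan ℝ ({x, p} : Set (Fin d → ℝ))}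


lemma dsw_frob {ι : Type*} [Fintype ι] (U : Submodule ℝ (EuclideanSpace ℝ ι)) (R : ι → ι → ℝ)
    (h : ∀ x ∈ U, ∀ u, ∑ v, R u v * x v = x u) :
    (Module.finrank ℝ U : ℝ) ≤ ∑ u, ∑ v, R u v ^ 2 := by
  classical
  let e := stdOrthonormalBasis ℝ U
  have he : Orthonormal ℝ (fun k => (e k : EuclideanSpace ℝ ι)) :=
    e.orthonormal.comp_linearIsometry U.subtypeₗᵢ
  have h1 : ∀ u, ∑ k, ((e k : EuclideanSpace ℝ ι) u) ^ 2 ≤ ∑ v, R u v ^ 2 := by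
    intro u
    have := he.sum_inner_products_le (WithLp.toLp 2 (R u)) (s := Finset.univ)
    rw [EuclideanSpace.norm_sq_eq] at this
    simp only [Real.norm_eq_abs, sq_abs] at this
    refine le_trans (le_of_eq ?_) this
    refine Finset.sum_congr rfl fun k _ => ?_
    rw [← h _ (e k).2 u]
    simp [PiLp.inner_apply]
  have h2 : ∀ k, ∑ u, ((e k : EuclideanSpace ℝ ι) u) ^ 2 = 1 := by
    intro k
    have := he.1 k
    have h3 := EuclideanSpace.norm_sq_eq (e k : EuclideanSpace ℝ ι)
    rw [this] at h3
    simp only [Real.norm_eq_abs, sq_abs] at h3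
    linarith
  calc (Module.finrank ℝ U : ℝ) = ∑ k : Fin (Module.finrank ℝ U), ∑ u, ((e k : EuclideanSpace ℝ ι) u) ^ 2 := by
        simp [h2]
    _ = ∑ u, ∑ k, ((e k : EuclideanSpace ℝ ι) u) ^ 2 := Finset.sum_comm
    _ ≤ _ := Finset.sum_le_sum fun u _ => h1 u

lemma dsw_scaling {ι κ : Type*} [Fintype ι] [DecidableEq ι] (T : Finset κ) (w : κ → ℝ)
    (hw : ∀ τ ∈ T, 0 ≤ w τ) (b : κ → ι → ℝ) (hb : ∀ τ u, 0 ≤ b τ u) (o : κ → ι)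
    (ho : ∀ τ ∈ T, 0 < b τ (o τ)) (hsum : ∀ i, ∑ τ ∈ T with o τ = i, w τ = 1)
    (η : ℝ) (hη : 0 < η) :
    ∃ t : ι → ℝ, ∑ u, (∑ τ ∈ T, w τ * (b τ u * Real.exp (t u) / ∑ v, b τ v * Real.exp (t v)) - 1) ^ 2
      ≤ η := by
  classical
  have hS : ∀ τ ∈ T, ∀ t : ι → ℝ, b τ (o τ) * Real.exp (t (o τ)) ≤ ∑ v, b τ v * Real.exp (t v) := by
    intro τ hτ t
    exact Finset.single_le_sum (f := fun v => b τ v * Real.exp (t v))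
      (fun v _ => mul_nonneg (hb τ v) (Real.exp_pos _).le) (Finset.mem_univ _)
  have hSpos : ∀ τ ∈ T, ∀ t : ι → ℝ, 0 < ∑ v, b τ v * Real.exp (t v) := fun τ hτ t =>
    lt_of_lt_of_le (mul_pos (ho τ hτ) (Real.exp_pos _)) (hS τ hτ t)
  let g : (ι → ℝ) → ℝ := fun t => ∑ τ ∈ T, w τ * Real.log (∑ v, b τ v * Real.exp (t v)) - ∑ u, t u
  let B : ℝ := ∑ τ ∈ T, w τ * Real.log (b τ (o τ))
  have hsumt : ∀ t : ι → ℝ, ∑ τ ∈ T, w τ * t (o τ) = ∑ u, t u := by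
    intro t
    rw [← Finset.sum_fiberwise T o]
    refine Finset.sum_congr rfl fun i _ => ?_
    calc _ = ∑ τ ∈ T with o τ = i, w τ * t i := Finset.sum_congr rfl fun τ hτ => by
            rw [(Finset.mem_filter.1 hτ).2]
      _ = t i := by rw [← Finset.sum_mul, hsum, one_mul]
  have hg : ∀ t, B ≤ g t := by
    intro t
    have : B + ∑ u, t u ≤ ∑ τ ∈ T, w τ * Real.log (∑ v, b τ v * Real.exp (t v)) := by
      rw [← hsumt, ← Finset.sum_add_distrib]
      refine Finset.sum_le_sum fun τ hτ => ?_
      rw [← mul_add]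
      refine mul_le_mul_of_nonneg_left ?_ (hw τ hτ)
      have := Real.log_le_log (mul_pos (ho τ hτ) (Real.exp_pos _)) (hS τ hτ t)
      rwa [Real.log_mul (ho τ hτ).ne' (Real.exp_pos _).ne', Real.log_exp] at this
    simp only [g]; linarith
  obtain ⟨ε, hε, hε2⟩ : ∃ ε > 0, 4 * ε * (g 0 - B) ≤ η := by
    refine ⟨η / (4 * (g 0 - B + 1)), ?_, ?_⟩
    · have := hg 0
      have : 0 < g 0 - B + 1 := by linarith
      positivity
    · have h0 := hg 0
      have : 0 < g 0 - B + 1 := by linarith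
      have e : 4 * (η / (4 * (g 0 - B + 1))) * (g 0 - B) = η * ((g 0 - B) / (g 0 - B + 1)) := by
        field_simp
      rw [e]
      have : (g 0 - B) / (g 0 - B + 1) ≤ 1 := by rw [div_le_one this]; linarith
      nlinarith
  let f : (ι → ℝ) → ℝ := fun t => g t + ε * ∑ u, t u ^ 2
  have hfc : Continuous f := by
    have : ∀ τ ∈ T, Continuous fun t : ι → ℝ => Real.log (∑ v, b τ v * Real.exp (t v)) := by
      intro τ hτ
      refine Continuous.log (by fun_prop) fun t => (hSpos τ hτ t).ne'
    have h2 : Continuous fun t : ι → ℝ => ∑ τ ∈ T, w τ * Real.log (∑ v, b τ v * Real.exp (t v)) :=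
      continuous_finsetSum _ fun τ hτ => continuous_const.mul (this τ hτ)
    simp only [f, g]
    fun_prop
  have hmin : ∃ t, ∀ y, f t ≤ f y := by
    have hc : IsCompact (Metric.closedBall (0 : ι → ℝ) (Real.sqrt ((g 0 - B) / ε))) :=
      isCompact_closedBall _ _
    obtain ⟨t, ht, htm⟩ := hc.exists_isMinOn ⟨0, by simp⟩ hfc.continuousOn
    refine ⟨t, fun y => ?_⟩
    by_cases hy : y ∈ Metric.closedBall (0 : ι → ℝ) (Real.sqrt ((g 0 - B) / ε))
    · exact htm hy
    · have h0 : f t ≤ f 0 := htm (by simp)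
      have hf0 : f 0 = g 0 := by simp [f]
      have : ∃ u, Real.sqrt ((g 0 - B) / ε) < |y u| := by
        by_contra hcon
        push Not at hcon
        apply hy
        rw [mem_closedBall_zero_iff]
        exact (pi_norm_le_iff_of_nonneg (Real.sqrt_nonneg _)).2 hcon
      obtain ⟨u, hu⟩ := this
      have h1 : (g 0 - B) / ε < y u ^ 2 := by
        rw [← sq_abs]
        exact (Real.sqrt_lt' (lt_of_le_of_lt (Real.sqrt_nonneg _) hu)).1 hu
      have h2 : y u ^ 2 ≤ ∑ u, y u ^ 2 :=
        Finset.single_le_sum (f := fun u => y u ^ 2) (fun v _ => sq_nonneg _) (Finset.mem_univ _)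
      have h3 : g 0 - B < ε * ∑ u, y u ^ 2 := by
        rw [div_lt_iff₀ hε] at h1
        nlinarith
      have := hg y
      simp only [f] at *
      linarith
  obtain ⟨t, ht⟩ := hmin
  refine ⟨t, ?_⟩
  have hder : ∀ u, ∑ τ ∈ T, w τ * (b τ u * Real.exp (t u) / ∑ v, b τ v * Real.exp (t v)) - 1
      = - (2 * ε * t u) := by
    intro u
    have hupd : ∀ v, HasDerivAt (fun x : ℝ => Function.update t u x v) (if v = u then 1 else 0) (t u) := by
      intro v
      by_cases hv : v = u
      · subst hv; simpa using hasDerivAt_id' (t v)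
      · simpa [hv] using hasDerivAt_const (t u) (t v)
    have hd : HasDerivAt (fun x : ℝ => f (Function.update t u x))
        (∑ τ ∈ T, w τ * (b τ u * Real.exp (t u) / ∑ v, b τ v * Real.exp (t v)) - 1 + 2 * ε * t u)
        (t u) := by
      have h1 : ∀ τ ∈ T, HasDerivAt (fun x : ℝ => w τ * Real.log (∑ v, b τ v * Real.exp (Function.update t u x v)))
          (w τ * (b τ u * Real.exp (t u) / ∑ v, b τ v * Real.exp (t v))) (t u) := by
        intro τ hτ
        have h2 : HasDerivAt (fun x : ℝ => ∑ v, b τ v * Real.exp (Function.update t u x v))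
            (∑ v, b τ v * (Real.exp (Function.update t u (t u) v) * (if v = u then 1 else 0))) (t u) :=
          HasDerivAt.fun_sum fun v _ => ((hupd v).exp).const_mul _
        have h3 := (h2.log (by simpa using (hSpos τ hτ t).ne')).const_mul (w τ)
        simpa using h3
      have h4 := HasDerivAt.fun_sum h1
      have h5 : HasDerivAt (fun x : ℝ => ∑ v, Function.update t u x v)
          (∑ v, if v = u then (1:ℝ) else 0) (t u) := HasDerivAt.fun_sum fun v _ => hupd v
      have h6 : HasDerivAt (fun x : ℝ => ∑ v, Function.update t u x v ^ 2)
          (∑ v, ((2:ℕ) * Function.update t u (t u) v ^ (2-1) * if v = u then (1:ℝ) else 0)) (t u) :=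
        HasDerivAt.fun_sum fun v _ => (hupd v).fun_pow 2
      have h7 := (h4.sub h5).add (h6.const_mul ε)
      refine HasDerivAt.congr_deriv (f := fun x : ℝ => f (Function.update t u x)) h7 ?_
      simp
      ring
    have hm : IsLocalMin (fun x : ℝ => f (Function.update t u x)) (t u) := by
      refine Filter.Eventually.of_forall fun x => ?_
      simpa using ht (Function.update t u x)
    have := hm.hasDerivAt_eq_zero hd
    linarith
  simp only [hder]
  have h0 : f t ≤ f 0 := ht 0
  have hf0 : f 0 = g 0 := by simp [f]
  have hgt := hg t
  have h1 : ε * ∑ u, t u ^ 2 ≤ g 0 - B := by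
    simp only [f] at h0 hf0; linarith
  calc ∑ u, (-(2 * ε * t u)) ^ 2 = 4 * ε * (ε * ∑ u, t u ^ 2) := by
        rw [Finset.mul_sum, Finset.mul_sum]; exact Finset.sum_congr rfl fun u _ => by ring
    _ ≤ 4 * ε * (g 0 - B) := by gcongr
    _ ≤ η := hε2

lemma dsw_rank {ι κ : Type*} [Fintype ι] [DecidableEq ι] (T : Finset κ) (w : κ → ℝ)
    (hw : ∀ τ ∈ T, 0 ≤ w τ) (a : κ → ι → ℝ) (o : κ → ι)
    (ho : ∀ τ ∈ T, a τ (o τ) ≠ 0) (hsum : ∀ i, ∑ τ ∈ T with o τ = i, w τ = 1)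
    (c : ℝ) (hc : ∀ u v, u ≠ v → ∑ τ ∈ T with a τ u ≠ 0 ∧ a τ v ≠ 0, w τ ≤ c) (hc0 : 0 ≤ c)
    (d : ℕ) (Φ : (Fin d → ℝ) →ₗ[ℝ] (ι → ℝ)) (hΦ : Function.Injective Φ)
    (hker : ∀ l, ∀ τ ∈ T, ∑ u, a τ u * Φ l u = 0) :
    (d : ℝ) ≤ c * Fintype.card ι := by
  classical
  refine le_of_forall_pos_le_add fun η hη => ?_
  obtain ⟨t, ht⟩ := dsw_scaling T w hw (fun τ u => a τ u ^ 2) (fun τ u => sq_nonneg _) o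
    (fun τ hτ => by have := ho τ hτ; positivity) hsum η hη
  -- normalised rows
  let S : κ → ℝ := fun τ => ∑ v, a τ v ^ 2 * Real.exp (t v)
  have hSpos : ∀ τ ∈ T, 0 < S τ := by
    intro τ hτ
    refine Finset.sum_pos' (fun v _ => by positivity) ⟨o τ, Finset.mem_univ _, ?_⟩
    have := ho τ hτ
    positivity
  let A : κ → ι → ℝ := fun τ u => a τ u * Real.exp (t u / 2) / Real.sqrt (S τ)
  have hexp : ∀ u, Real.exp (t u / 2) ^ 2 = Real.exp (t u) := by
    intro u; rw [← Real.exp_nat_mul]; congr 1; push_cast; ring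
  have hA2 : ∀ τ ∈ T, ∀ u, A τ u ^ 2 = a τ u ^ 2 * Real.exp (t u) / S τ := by
    intro τ hτ u
    simp only [A]
    rw [div_pow, mul_pow, hexp, Real.sq_sqrt (hSpos τ hτ).le]
  have hA1 : ∀ τ ∈ T, ∑ u, A τ u ^ 2 = 1 := by
    intro τ hτ
    rw [Finset.sum_congr rfl fun u _ => hA2 τ hτ u, ← Finset.sum_div]
    exact div_self (hSpos τ hτ).ne'
  let M : ι → ι → ℝ := fun u v => ∑ τ ∈ T, w τ * (A τ u * A τ v)
  let R : ι → ι → ℝ := fun u v => (if u = v then 1 else 0) - M u v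
  let Ψ : (Fin d → ℝ) →ₗ[ℝ] EuclideanSpace ℝ ι :=
    { toFun := fun l => WithLp.toLp 2 fun u => Real.exp (-(t u / 2)) * Φ l u
      map_add' := fun x y => by ext u; simp [mul_add]
      map_smul' := fun r x => by ext u; simp; ring }
  have hΨ : Function.Injective Ψ := by
    intro x y hxy
    apply hΦ
    funext u
    have := congrArg (fun z : EuclideanSpace ℝ ι => z u) hxy
    simpa [Ψ] using this
  have hfr : Module.finrank ℝ (LinearMap.range Ψ) = d := by
    rw [LinearMap.finrank_range_of_inj hΨ]; simp
  have h1 := dsw_frob (LinearMap.range Ψ) R (by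
    rintro _ ⟨l, rfl⟩ u
    have hz : ∑ v, M u v * Ψ l v = 0 := by
      have : ∀ v, M u v * Ψ l v = ∑ τ ∈ T, (w τ * A τ u / Real.sqrt (S τ)) * (a τ v * Φ l v) := by
        intro v
        simp only [M, A, Ψ, Finset.sum_mul]
        refine Finset.sum_congr rfl fun τ _ => ?_
        have : Real.exp (t v / 2) * Real.exp (-(t v / 2)) = 1 := by rw [← Real.exp_add]; simp
        simp only [LinearMap.coe_mk, AddHom.coe_mk]
        linear_combination (w τ * (a τ u * Real.exp (t u / 2) / √(S τ)) * a τ v / √(S τ) * Φ l v) * this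
      rw [Finset.sum_congr rfl fun v _ => this v, Finset.sum_comm]
      refine Finset.sum_eq_zero fun τ hτ => ?_
      rw [← Finset.mul_sum, hker l τ hτ, mul_zero]
    simp only [R, sub_mul, Finset.sum_sub_distrib, hz]
    simp)
  rw [hfr] at h1
  refine h1.trans ?_
  have hdiag : ∑ u, R u u ^ 2 ≤ η := by
    refine le_trans (le_of_eq ?_) ht
    refine Finset.sum_congr rfl fun u _ => ?_
    have : M u u = ∑ τ ∈ T, w τ * (a τ u ^ 2 * Real.exp (t u) / ∑ v, a τ v ^ 2 * Real.exp (t v)) := by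
      refine Finset.sum_congr rfl fun τ hτ => ?_
      rw [← pow_two, hA2 τ hτ]
    simp only [R, if_true]
    rw [← this]; ring
  have hoff : ∀ u v, u ≠ v → R u v ^ 2 ≤ c * ∑ τ ∈ T, w τ * (A τ u ^ 2 * A τ v ^ 2) := by
    intro u v huv
    have e1 : R u v ^ 2 = M u v ^ 2 := by simp [R, huv]
    have e2 : M u v = ∑ τ ∈ T with a τ u ≠ 0 ∧ a τ v ≠ 0, Real.sqrt (w τ) * (Real.sqrt (w τ) * (A τ u * A τ v)) := by
      rw [Finset.sum_filter]
      refine Finset.sum_congr rfl fun τ hτ => ?_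
      split_ifs with h
      · linear_combination (-(A τ u * A τ v)) * Real.mul_self_sqrt (hw τ hτ)
      · by_cases h' : a τ u = 0
        · simp [A, h']
        · have : a τ v = 0 := by tauto
          simp [A, this]
    have cs := Finset.sum_mul_sq_le_sq_mul_sq (T.filter fun τ => a τ u ≠ 0 ∧ a τ v ≠ 0)
      (fun τ => Real.sqrt (w τ)) (fun τ => Real.sqrt (w τ) * (A τ u * A τ v))
    rw [← e2] at cs
    rw [e1]
    refine cs.trans ?_
    refine mul_le_mul ?_ ?_ (Finset.sum_nonneg fun _ _ => sq_nonneg _) hc0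
    · refine le_trans (le_of_eq (Finset.sum_congr rfl fun τ hτ => ?_)) (hc u v huv)
      exact Real.sq_sqrt (hw τ (Finset.mem_filter.1 hτ).1)
    · refine le_trans (Finset.sum_le_sum_of_subset_of_nonneg (Finset.filter_subset _ _)
        fun _ _ _ => sq_nonneg _) (le_of_eq (Finset.sum_congr rfl fun τ hτ => ?_))
      rw [mul_pow, mul_pow, Real.sq_sqrt (hw τ hτ)]
  have hwtot : ∑ τ ∈ T, w τ = Fintype.card ι := by
    rw [← Finset.sum_fiberwise T o]; simp [hsum]
  have hall : ∀ u v, R u v ^ 2 ≤ (if u = v then R u u ^ 2 else 0) +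
      c * ∑ τ ∈ T, w τ * (A τ u ^ 2 * A τ v ^ 2) := by
    intro u v
    by_cases h : u = v
    · subst h
      have : 0 ≤ ∑ τ ∈ T, w τ * (A τ u ^ 2 * A τ u ^ 2) :=
        Finset.sum_nonneg fun τ hτ => mul_nonneg (hw τ hτ) (by positivity)
      simp only [if_true]
      nlinarith
    · simpa [h] using hoff u v h
  calc ∑ u, ∑ v, R u v ^ 2 ≤ ∑ u, ∑ v, ((if u = v then R u u ^ 2 else 0) +
      c * ∑ τ ∈ T, w τ * (A τ u ^ 2 * A τ v ^ 2)) :=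
        Finset.sum_le_sum fun u _ => Finset.sum_le_sum fun v _ => hall u v
    _ = ∑ u, R u u ^ 2 + c * ∑ τ ∈ T, w τ * ((∑ u, A τ u ^ 2) * ∑ v, A τ v ^ 2) := by
        simp only [Finset.sum_add_distrib, Finset.sum_ite_eq, Finset.mem_univ, if_true,
          ← Finset.mul_sum]
        congr 2
        rw [Finset.sum_congr rfl fun u _ => Finset.sum_comm, Finset.sum_comm]
        refine Finset.sum_congr rfl fun τ _ => ?_
        rw [Finset.sum_mul_sum]
        simp only [Finset.mul_sum]
    _ = ∑ u, R u u ^ 2 + c * ∑ τ ∈ T, w τ := by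
        congr 2
        exact Finset.sum_congr rfl fun τ hτ => by rw [hA1 τ hτ]; ring
    _ ≤ c * Fintype.card ι + η := by rw [hwtot]; linarith

lemma dsw_comb {ι : Type*} [Fintype ι] (C : ι → ι → ι → Prop)
    (h12 : ∀ i j k, C i j k → C j i k) (h23 : ∀ i j k, C i j k → C i k j)
    (hne : ∀ i j k, C i j k → i ≠ j) (N : ι → ι → ℕ)
    (hNdef : ∀ i j, N i j = Nat.card {k // C i j k})
    (hN : ∀ i j k, C i j k → N i j = N i k)
    (d : ℕ) (p : ι → Fin d → ℝ)
    (rel : ∀ i j k, C i j k → ∃ b : ℝ, p i = b • p j + (1 - b) • p k)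
    (p₀ : Fin d → ℝ) (hspan : Submodule.span ℝ (Set.range fun i => p i - p₀) = ⊤)
    (s : ℝ) (hs : 0 < s) (hS : ∀ i, s ≤ (Nat.card {j // N i j ≠ 0} : ℝ)) :
    (d : ℝ) ≤ 6 / s * Fintype.card ι := by
  classical
  have rel' : ∀ i j k, ∃ b : ℝ, C i j k → p i = b • p j + (1 - b) • p k := by
    intro i j k
    by_cases h : C i j k
    · obtain ⟨b, hb⟩ := rel i j k h
      exact ⟨b, fun _ => hb⟩
    · exact ⟨0, fun h' => absurd h' h⟩
  choose B hB using rel'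
  have hNc : ∀ i j, N i j = (Finset.univ.filter (C i j)).card := by
    intro i j; rw [hNdef, Nat.card_eq_fintype_card, Fintype.card_subtype]
  have hNsymm : ∀ i j, N i j = N j i := by
    intro i j
    rw [hNc, hNc]
    congr 1
    ext k
    simp only [Finset.mem_filter, Finset.mem_univ, true_and]
    exact ⟨h12 _ _ _, h12 _ _ _⟩
  let S : ι → ℕ := fun i => (Finset.univ.filter fun j => N i j ≠ 0).card
  have hSs : ∀ i, s ≤ (S i : ℝ) := by
    intro i
    have := hS i
    rwa [Nat.card_eq_fintype_card, Fintype.card_subtype] at this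
  have hSpos : ∀ i, 0 < (S i : ℝ) := fun i => lt_of_lt_of_le hs (hSs i)
  let T : Finset (ι × ι × ι) := Finset.univ.filter fun τ => C τ.1 τ.2.1 τ.2.2
  let w : ι × ι × ι → ℝ := fun τ => 1 / (S τ.1 * N τ.1 τ.2.1)
  let a : ι × ι × ι → ι → ℝ := fun τ u =>
    (if u = τ.1 then 1 else 0) - B τ.1 τ.2.1 τ.2.2 * (if u = τ.2.1 then 1 else 0)
      - (1 - B τ.1 τ.2.1 τ.2.2) * (if u = τ.2.2 then 1 else 0)
  let Φ : (Fin d → ℝ) →ₗ[ℝ] (ι → ℝ) :=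
    { toFun := fun l i => l ⬝ᵥ (p i - p₀)
      map_add' := fun x y => by ext i; exact add_dotProduct _ _ _
      map_smul' := fun r x => by ext i; exact smul_dotProduct _ _ _ }
  have hΦ : Function.Injective Φ := by
    rw [← LinearMap.ker_eq_bot, LinearMap.ker_eq_bot']
    intro l hl
    have h1 : ∀ y ∈ Submodule.span ℝ (Set.range fun i => p i - p₀), l ⬝ᵥ y = 0 := by
      intro y hy
      induction hy using Submodule.span_induction with
      | mem x hx => obtain ⟨i, rfl⟩ := hx; exact congrFun hl i
      | zero => simp
      | add x y _ _ hx hy => rw [dotProduct_add, hx, hy, add_zero]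
      | smul r x _ hx => rw [dotProduct_smul, hx, smul_zero]
    exact dotProduct_self_eq_zero.1 (h1 l (by rw [hspan]; trivial))
  refine dsw_rank T w (fun τ _ => by positivity) a (fun τ => τ.1) ?_ ?_ (6 / s) ?_ (by positivity)
    d Φ hΦ ?_
  · rintro ⟨i, j, k⟩ hτ
    have hC : C i j k := by simpa [T] using hτ
    have h1 := hne _ _ _ hC
    have h2 := hne _ _ _ (h23 _ _ _ hC)
    simp [a, h1, h2]
  · intro i
    have e : ∑ τ ∈ T with τ.1 = i, w τ = ∑ j, ∑ k, if C i j k then 1 / ((S i : ℝ) * N i j) else 0 := by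
      rw [Finset.sum_filter, Finset.sum_filter, Fintype.sum_prod_type]
      rw [Finset.sum_eq_single i]
      · rw [Fintype.sum_prod_type]
        simp [w]
      · intro j _ hj
        simp [hj]
      · simp
    rw [e]
    have e2 : ∀ j, (∑ k, if C i j k then 1 / ((S i : ℝ) * N i j) else 0)
        = if N i j ≠ 0 then 1 / (S i : ℝ) else 0 := by
      intro j
      rw [← Finset.sum_filter, Finset.sum_const, ← hNc, nsmul_eq_mul]
      have := hSpos i
      split_ifs with h
      · have : (N i j : ℝ) ≠ 0 := by exact_mod_cast h
        field_simp
      · push Not at h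
        simp [h]
    simp only [e2]
    rw [← Finset.sum_filter, Finset.sum_const, nsmul_eq_mul]
    exact mul_one_div_cancel (hSpos i).ne'
  · intro u v huv
    let K := Finset.univ.filter (C u v)
    let I : Finset (ι × ι × ι) := K.image (fun k => (u, v, k)) ∪ K.image (fun k => (u, k, v)) ∪
      K.image (fun k => (v, u, k)) ∪ K.image (fun k => (v, k, u)) ∪
      K.image (fun k => (k, u, v)) ∪ K.image (fun k => (k, v, u))
    have hI : I.card ≤ 6 * N u v := by
      have hK : ∀ g : ι → ι × ι × ι, (K.image g).card ≤ N u v := fun g => by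
        rw [hNc]; exact Finset.card_image_le
      have q1 := hK (fun k => (u, v, k))
      have q2 := hK (fun k => (u, k, v))
      have q3 := hK (fun k => (v, u, k))
      have q4 := hK (fun k => (v, k, u))
      have q5 := hK (fun k => (k, u, v))
      have q6 := hK (fun k => (k, v, u))
      have := Finset.card_union_le (K.image (fun k => (u, v, k)) ∪ K.image (fun k => (u, k, v)) ∪
        K.image (fun k => (v, u, k)) ∪ K.image (fun k => (v, k, u)) ∪
        K.image (fun k => (k, u, v))) (K.image (fun k => (k, v, u)))
      have := Finset.card_union_le (K.image (fun k => (u, v, k)) ∪ K.image (fun k => (u, k, v)) ∪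
        K.image (fun k => (v, u, k)) ∪ K.image (fun k => (v, k, u))) (K.image (fun k => (k, u, v)))
      have := Finset.card_union_le (K.image (fun k => (u, v, k)) ∪ K.image (fun k => (u, k, v)) ∪
        K.image (fun k => (v, u, k))) (K.image (fun k => (v, k, u)))
      have := Finset.card_union_le (K.image (fun k => (u, v, k)) ∪ K.image (fun k => (u, k, v)))
        (K.image (fun k => (v, u, k)))
      have := Finset.card_union_le (K.image (fun k => (u, v, k))) (K.image (fun k => (u, k, v)))
      simp only [I]
      omega
    have hkey : ∀ τ ∈ T.filter (fun τ => a τ u ≠ 0 ∧ a τ v ≠ 0), τ ∈ I ∧ N τ.1 τ.2.1 = N u v := by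
      rintro ⟨i, j, k⟩ hτ
      simp only [Finset.mem_filter, T, Finset.mem_univ, true_and] at hτ
      obtain ⟨hC, hu, hv⟩ := hτ
      have hmem : ∀ x, a (i, j, k) x ≠ 0 → x = i ∨ x = j ∨ x = k := by
        intro x hx
        by_contra hcon
        push Not at hcon
        apply hx
        simp [a, hcon]
      have c2 := h23 _ _ _ hC
      have c3 := h12 _ _ _ hC
      have c4 := h23 _ _ _ c3
      have c5 := h12 _ _ _ c2
      have c6 := h12 _ _ _ c4
      have n1 := hN _ _ _ hC
      have n2 := hN _ _ _ c3
      have n3 := hNsymm i j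
      have n4 := hNsymm i k
      have n5 := hNsymm j k
      simp only [I, K, Finset.mem_union, Finset.mem_image, Finset.mem_filter, Finset.mem_univ,
        true_and, Prod.mk.injEq]
      rcases hmem u hu with rfl | rfl | rfl <;> rcases hmem v hv with rfl | rfl | rfl <;>
        first
        | exact absurd rfl huv
        | (refine ⟨?_, by omega⟩
           first
            | exact (Or.inr ⟨_, by assumption, rfl, rfl, rfl⟩)
            | exact (Or.inl (Or.inr ⟨_, by assumption, rfl, rfl, rfl⟩))
            | exact (Or.inl (Or.inl (Or.inr ⟨_, by assumption, rfl, rfl, rfl⟩)))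
            | exact (Or.inl (Or.inl (Or.inl (Or.inr ⟨_, by assumption, rfl, rfl, rfl⟩))))
            | exact (Or.inl (Or.inl (Or.inl (Or.inl (Or.inr ⟨_, by assumption, rfl, rfl, rfl⟩)))))
            | exact (Or.inl (Or.inl (Or.inl (Or.inl (Or.inl ⟨_, by assumption, rfl, rfl, rfl⟩))))))
    calc ∑ τ ∈ T with a τ u ≠ 0 ∧ a τ v ≠ 0, w τ
        ≤ (T.filter (fun τ => a τ u ≠ 0 ∧ a τ v ≠ 0)).card • (1 / (s * N u v)) := by
          refine Finset.sum_le_card_nsmul _ _ _ fun τ hτ => ?_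
          have := (hkey τ hτ).2
          simp only [w, this]
          by_cases h0 : N u v = 0
          · simp [h0]
          · have : 0 < (N u v : ℝ) := by positivity
            have := hSs τ.1
            gcongr
      _ ≤ (6 * N u v : ℕ) • (1 / (s * N u v)) := by
          refine nsmul_le_nsmul_left (by positivity) ?_
          exact (Finset.card_le_card fun τ hτ => (hkey τ hτ).1).trans hI
      _ ≤ 6 / s := by
          rw [nsmul_eq_mul]
          by_cases h0 : N u v = 0
          · simp [h0]; positivity
          · have : 0 < (N u v : ℝ) := by positivity
            push_cast
            apply le_of_eq
            field_simp
  · rintro l ⟨i, j, k⟩ hτ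
    have hC : C i j k := by simpa [T] using hτ
    have h1 := hB _ _ _ hC
    have e : ∀ x : ι → ℝ, ∑ u, a (i, j, k) u * x u = x i - B i j k * x j - (1 - B i j k) * x k := by
      intro x
      simp [a, sub_mul, Finset.sum_sub_distrib, mul_assoc]
    rw [e]
    have e3 : p i - p₀ = B i j k • (p j - p₀) + (1 - B i j k) • (p k - p₀) := by
      rw [h1]; module
    simp only [Φ, LinearMap.coe_mk, AddHom.coe_mk]
    rw [e3, dotProduct_add, dotProduct_smul, dotProduct_smul, smul_eq_mul, smul_eq_mul]
    ring

lemma dsw_line_eq {V : Type*} [AddCommGroup V] [Module ℝ V] {x y z : V} (hxz : x ≠ z)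
    (h : z ∈ affineSpan ℝ ({x, y} : Set V)) :
    affineSpan ℝ ({x, z} : Set V) = affineSpan ℝ ({x, y} : Set V) := by
  refine le_antisymm (affineSpan_pair_le_of_mem_of_mem (left_mem_affineSpan_pair ℝ _ _) h)
    (affineSpan_pair_le_of_mem_of_mem (left_mem_affineSpan_pair ℝ _ _) ?_)
  obtain ⟨r, rfl⟩ := mem_affineSpan_pair_iff_exists_lineMap_eq.1 h
  have hr : r ≠ 0 := by
    rintro rfl
    simp at hxz
  refine mem_affineSpan_pair_iff_exists_lineMap_eq.2 ⟨r⁻¹, ?_⟩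
  simp only [AffineMap.lineMap_apply, vsub_eq_sub, vadd_eq_add, add_sub_cancel_right, smul_smul,
    inv_mul_cancel₀ hr, one_smul, sub_add_cancel]

/-- **Corollary 2.2** (from the theorem of Dvir, Saraf and Wigderson, with
`c = 12`). If `P` is a finite set of `n` points in `ℝ^d` whose affine span is
`d`-dimensional (i.e. all of `ℝ^d`), then there is a point `x ∈ P` such that the
number of distinct lines connecting `x` to the other points of `P` is at least
`n·(1 − 12/d)`. -/
theorem exists_point_many_lines (d n : ℕ) (hd : 1 ≤ d)
    (P : Finset (Fin d → ℝ)) (hcard : P.card = n)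
    (hspan : affineSpan ℝ (P : Set (Fin d → ℝ)) = ⊤) :
    ∃ x ∈ P, (n : ℝ) * (1 - 12 / (d : ℝ)) ≤ ((linesThrough P x).ncard : ℝ) := by
  classical
  by_contra hcon
  push Not at hcon
  have hdpos : (0 : ℝ) < d := by exact_mod_cast hd
  have hPne : P.Nonempty := by
    rw [Finset.nonempty_iff_ne_empty]
    rintro rfl
    simp at hspan
  obtain ⟨p₀, hp₀⟩ := hPne
  have hvs : vectorSpan ℝ (P : Set (Fin d → ℝ)) = ⊤ := by
    rw [← direction_affineSpan, hspan, AffineSubspace.direction_top]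
  have hn : d + 1 ≤ n := by
    have h1 := finrank_vectorSpan_image_finset_le ℝ (id : (Fin d → ℝ) → _) P (n := n - 1)
      (by have := Finset.card_pos.2 ⟨p₀, hp₀⟩; omega)
    rw [Finset.image_id, hvs, finrank_top] at h1
    simp at h1
    omega
  have hnd : (d : ℝ) + 1 ≤ n := by exact_mod_cast hn
  let C : P → P → P → Prop := fun i j k => i ≠ j ∧ i ≠ k ∧ j ≠ k ∧
    (k : Fin d → ℝ) ∈ affineSpan ℝ ({(i : Fin d → ℝ), (j : Fin d → ℝ)} : Set (Fin d → ℝ))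
  have hline : ∀ i j k, C i j k → affineSpan ℝ ({(i : Fin d → ℝ), (k : Fin d → ℝ)} : Set (Fin d → ℝ))
      = affineSpan ℝ ({(i : Fin d → ℝ), (j : Fin d → ℝ)} : Set (Fin d → ℝ)) := by
    rintro i j k ⟨_, hik, _, h⟩
    exact dsw_line_eq (fun h => hik (Subtype.ext h)) h
  have h12 : ∀ i j k, C i j k → C j i k := by
    rintro i j k ⟨a, b, c, h⟩
    exact ⟨a.symm, c, b, by rwa [Set.pair_comm]⟩
  have h23 : ∀ i j k, C i j k → C i k j := by
    rintro i j k hC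
    have := hline _ _ _ hC
    obtain ⟨a, b, c, h⟩ := hC
    refine ⟨b, a, c.symm, ?_⟩
    rw [this]
    exact right_mem_affineSpan_pair ℝ _ _
  let N : P → P → ℕ := fun i j => Nat.card {k // C i j k}
  have hN : ∀ i j k, C i j k → N i j = N i k := by
    intro i j k hC
    have hl := hline _ _ _ hC
    obtain ⟨hij, hik, hjk, hm⟩ := hC
    -- both counts are (number of points on the line) - 2
    have key : ∀ i j : P, i ≠ j → N i j + 2 = (Finset.univ.filter fun x : P =>
        (x : Fin d → ℝ) ∈ affineSpan ℝ ({(i : Fin d → ℝ), (j : Fin d → ℝ)} : Set (Fin d → ℝ))).card := by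
      intro i j hij
      have e : (Finset.univ.filter fun x : P =>
        (x : Fin d → ℝ) ∈ affineSpan ℝ ({(i : Fin d → ℝ), (j : Fin d → ℝ)} : Set (Fin d → ℝ)))
        = insert i (insert j (Finset.univ.filter (C i j))) := by
        ext x
        simp only [Finset.mem_filter, Finset.mem_univ, true_and, Finset.mem_insert, C]
        constructor
        · intro h
          by_cases h1 : x = i
          · exact Or.inl h1
          · by_cases h2 : x = j
            · exact Or.inr (Or.inl h2)
            · exact Or.inr (Or.inr ⟨hij, fun h => h1 h.symm, fun h => h2 h.symm, h⟩)
        · rintro (rfl | rfl | h)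
          · exact left_mem_affineSpan_pair ℝ _ _
          · exact right_mem_affineSpan_pair ℝ _ _
          · exact h.2.2.2
      rw [e, Finset.card_insert_of_notMem (by simp [C, hij]), Finset.card_insert_of_notMem (by simp [C])]
      simp only [N]
      rw [Nat.card_eq_fintype_card, Fintype.card_subtype]
    have k1 := key i j hij
    have k2 := key i k hik
    rw [hl] at k2
    omega
  have hrel : ∀ i j k, C i j k → ∃ b : ℝ, (i : Fin d → ℝ) = b • (j : Fin d → ℝ) + (1 - b) • (k : Fin d → ℝ) := by
    intro i j k hC
    have h1 := (h23 _ _ _ (h12 _ _ _ hC))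
    have h2 := (h12 _ _ _ h1).2.2.2
    obtain ⟨r, hr⟩ := mem_affineSpan_pair_iff_exists_lineMap_eq.1 h2
    refine ⟨r, ?_⟩
    rw [← hr, AffineMap.lineMap_apply_module]
    module
  have hsp : Submodule.span ℝ (Set.range fun i : P => (i : Fin d → ℝ) - p₀) = ⊤ := by
    rw [← hvs, vectorSpan_eq_span_vsub_set_right ℝ (show p₀ ∈ (P : Set (Fin d → ℝ)) from hp₀)]
    congr 1
    ext y
    simp
  have hSx : ∀ x : P, (11 * n / d : ℝ) ≤ (Nat.card {j // N x j ≠ 0} : ℝ) := by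
    intro x
    have hx := hcon x x.2
    let O : Finset P := Finset.univ.filter fun j => j ≠ x ∧ N x j = 0
    have hfin : (linesThrough P (x : Fin d → ℝ)).Finite := by
      refine (P.finite_toSet.image fun p => affineSpan ℝ ({(x : Fin d → ℝ), p} : Set (Fin d → ℝ))).subset ?_
      rintro L ⟨p, hp, _, rfl⟩
      exact ⟨p, hp, rfl⟩
    have hO : O.card ≤ (linesThrough P (x : Fin d → ℝ)).ncard := by
      rw [← Set.ncard_coe_finset]
      refine Set.ncard_le_ncard_of_injOn
        (fun j : P => affineSpan ℝ ({(x : Fin d → ℝ), (j : Fin d → ℝ)} : Set (Fin d → ℝ))) ?_ ?_ hfin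
      · intro j hj
        have hj' : j ≠ x ∧ N x j = 0 := by simpa [O] using hj
        exact ⟨j, j.2, fun h => hj'.1 (Subtype.ext h), rfl⟩
      · intro j hj k hk hjk
        have hj' : j ≠ x ∧ N x j = 0 := by simpa [O] using hj
        have hk' : k ≠ x ∧ N x k = 0 := by simpa [O] using hk
        by_contra hne
        have hC : C x j k := by
          refine ⟨hj'.1.symm, hk'.1.symm, hne, ?_⟩
          have hjk2 : affineSpan ℝ ({(x : Fin d → ℝ), (j : Fin d → ℝ)} : Set (Fin d → ℝ)) =
            affineSpan ℝ ({(x : Fin d → ℝ), (k : Fin d → ℝ)} : Set (Fin d → ℝ)) := hjk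
          rw [hjk2]
          exact right_mem_affineSpan_pair ℝ _ _
        have h0 := hj'.2
        simp only [N] at h0
        have : Nonempty {k // C x j k} := ⟨⟨k, hC⟩⟩
        have := Nat.card_pos (α := {k // C x j k})
        omega
    have hcount : n ≤ 1 + O.card + Nat.card {j // N x j ≠ 0} := by
      rw [Nat.card_eq_fintype_card, Fintype.card_subtype]
      have hsub : (Finset.univ : Finset P) ⊆ insert x (O ∪ Finset.univ.filter fun j => N x j ≠ 0) := by
        intro j _
        simp only [O, Finset.mem_insert, Finset.mem_union, Finset.mem_filter, Finset.mem_univ, true_and]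
        tauto
      have h1 := Finset.card_le_card hsub
      have h2 := Finset.card_insert_le x (O ∪ Finset.univ.filter fun j => N x j ≠ 0)
      have h3 := Finset.card_union_le O (Finset.univ.filter fun j => N x j ≠ 0)
      have h4 : (Finset.univ : Finset P).card = n := by simp [hcard]
      omega
    have hO' : (O.card : ℝ) ≤ ((linesThrough P (x : Fin d → ℝ)).ncard : ℝ) := by exact_mod_cast hO
    have hcount' : (n : ℝ) ≤ 1 + O.card + (Nat.card {j // N x j ≠ 0} : ℝ) := by exact_mod_cast hcount
    have h5 : (1 : ℝ) ≤ n / d := by rw [le_div_iff₀ hdpos]; linarith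
    have h6 : (n : ℝ) * (1 - 12 / d) = n - 12 * (n / d) := by ring
    have h7 : (11 * n / d : ℝ) = 11 * (n / d) := by ring
    rw [h6] at hx
    rw [h7]
    linarith
  have hnpos : (0 : ℝ) < n := by linarith
  have hfinal := dsw_comb C h12 h23 (fun i j k h => h.1) N (fun _ _ => rfl) hN d
    (fun i : P => (i : Fin d → ℝ)) hrel p₀ hsp (11 * n / d) (by positivity) hSx
  have hc : (Fintype.card P : ℝ) = n := by simp [hcard]
  rw [hc] at hfinal
  have : 6 / (11 * n / d : ℝ) * n = 6 / 11 * d := by field_simp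
  rw [this] at hfinal
  linarith
end

section
/- Let b = 1/48, let d ≥ 2 be an integer and let 0 < μ < 1. Then there exists n₀ = n₀(d, μ) such that the following holds for all n ≥ n₀. Let F ⊆ ℝ be a subfield of ℝ, let V be a vector space over ℝ, let u₁, …, u_k ∈ V be nonzero vectors, and let p₁, …, p_n ∈ V be distinct vectors that do not all lie in a common (d−1)-dimensional affine subspace of V (over ℝ). Suppose that for all x, y ∈ {1, …, n} there is some i ∈ {1, …, k} with p_x − p_y ∈ span_F(u_i). Then there exists a subset I ⊆ {1, …, k} such that u_ℓ ∈ span_F(u_i : i ∈ I) for at least d·|I| + (b·d − μ)·n + 1 indices ℓ ∈ {1, …, k}. -/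
theorem scaling {C : Type*} [Fintype C] [DecidableEq C] (T : Finset (Finset C))
    (w : Finset C → ℝ) (hw : ∀ S ∈ T, 0 < w S) (hcard : ∀ S ∈ T, S.card = 3)
    (M : Finset C → C → ℝ) (hM : ∀ S ∈ T, ∀ c, M S c ≠ 0 ↔ c ∈ S) (ε : ℝ) (hε : 0 < ε) :
    ∃ y : C → ℝ, ∀ c,
      (∑ S ∈ T, if c ∈ S then w S else 0) / 3 - ε ≤
        ∑ S ∈ T, w S * (M S c ^ 2 * Real.exp (y c) / ∑ c', M S c' ^ 2 * Real.exp (y c')) := by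
  classical
  set α : C → ℝ := fun c => (∑ S ∈ T, if c ∈ S then w S else 0) / 3 with hα
  let Z : Finset C → (C → ℝ) → ℝ := fun S y => ∑ c', M S c' ^ 2 * Real.exp (y c')
  have hZ : ∀ S ∈ T, ∀ y, 0 < Z S y := by
    intro S hS y
    have : S.Nonempty := by rw [← Finset.card_pos, hcard S hS]; norm_num
    obtain ⟨c, hc⟩ := this
    have hc' := (hM S hS c).2 hc
    refine Finset.sum_pos' (fun c' _ => by positivity) ⟨c, Finset.mem_univ _, by positivity⟩
  let f : (C → ℝ) → ℝ := fun y => ∑ S ∈ T, w S * Real.log (Z S y) - ∑ c, α c * y c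
  let b : ℝ := ∑ S ∈ T, w S * ((∑ c ∈ S, Real.log (M S c ^ 2)) / 3)
  have hfb : ∀ y, b ≤ f y := by
    intro y
    have h1 : ∑ c, α c * y c = ∑ S ∈ T, w S * ((∑ c ∈ S, y c) / 3) := by
      simp only [hα, Finset.sum_div, Finset.sum_mul, Finset.mul_sum]
      rw [Finset.sum_comm]
      refine Finset.sum_congr rfl fun S _ => ?_
      rw [← Finset.sum_filter_add_sum_filter_not Finset.univ (fun c => c ∈ S)]
      rw [Finset.sum_eq_zero (s := Finset.univ.filter (fun c => ¬ c ∈ S)), add_zero]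
      · have : Finset.univ.filter (fun c => c ∈ S) = S := by ext; simp
        rw [this]
        refine Finset.sum_congr rfl fun c hc => ?_
        simp [hc]; ring
      · intro c hc
        have := (Finset.mem_filter.1 hc).2
        simp [this]
    simp only [f, h1, b, ← Finset.sum_sub_distrib]
    refine Finset.sum_le_sum fun S hS => ?_
    rw [← mul_sub]
    refine mul_le_mul_of_nonneg_left ?_ (hw S hS).le
    rw [le_sub_iff_add_le, ← add_div, ← Finset.sum_add_distrib, div_le_iff₀ (by norm_num)]
    have h2 : ∀ c ∈ S, Real.log (M S c ^ 2) + y c ≤ Real.log (Z S y) := by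
      intro c hc
      have hc' := (hM S hS c).2 hc
      have h3 : Real.log (M S c ^ 2) + y c = Real.log (M S c ^ 2 * Real.exp (y c)) := by
        rw [Real.log_mul (by positivity) (by positivity), Real.log_exp]
      rw [h3]
      refine Real.log_le_log (by positivity) ?_
      exact Finset.single_le_sum (f := fun c' => M S c' ^ 2 * Real.exp (y c'))
        (fun c' _ => by positivity) (Finset.mem_univ c)
    have := Finset.sum_le_card_nsmul S _ _ h2
    rw [hcard S hS] at this
    simpa [mul_comm] using this
  have hfc : Continuous f := by
    refine Continuous.sub ?_ (by fun_prop)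
    refine continuous_finsetSum _ fun S hS => ?_
    refine continuous_const.mul (Continuous.log (by fun_prop) (fun y => (hZ S hS y).ne'))
  have hb0 : 0 ≤ f 0 - b := by linarith [hfb 0]
  obtain ⟨δ, hδ, hδε⟩ : ∃ δ : ℝ, 0 < δ ∧ 4 * δ * (f 0 - b) ≤ ε ^ 2 := by
    refine ⟨ε ^ 2 / (4 * (f 0 - b + 1)), by positivity, ?_⟩
    rw [mul_div_assoc', div_mul_eq_mul_div, div_le_iff₀ (by positivity)]
    nlinarith [sq_nonneg ε]
  let g : (C → ℝ) → ℝ := fun y => f y + δ * ∑ c, y c ^ 2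
  have hgc : Continuous g := by fun_prop
  obtain ⟨y, hy⟩ : ∃ y, ∀ z, g y ≤ g z := by
    refine hgc.exists_forall_le ?_
    have hlow : ∀ z : C → ℝ, b + δ * ‖z‖ ^ 2 ≤ g z := by
      intro z
      have : ‖z‖ ^ 2 ≤ ∑ c, z c ^ 2 := by
        have hnn : 0 ≤ ∑ c, z c ^ 2 := Finset.sum_nonneg fun c _ => sq_nonneg _
        have h1 : ‖z‖ ≤ √(∑ c, z c ^ 2) := by
          rw [pi_norm_le_iff_of_nonneg (Real.sqrt_nonneg _)]
          intro c
          rw [Real.norm_eq_abs]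
          refine Real.abs_le_sqrt ?_
          exact Finset.single_le_sum (f := fun c => z c ^ 2) (fun c _ => sq_nonneg _)
            (Finset.mem_univ c)
        calc ‖z‖ ^ 2 ≤ √(∑ c, z c ^ 2) ^ 2 := by gcongr
          _ = _ := Real.sq_sqrt hnn
      have h2 := mul_le_mul_of_nonneg_left this hδ.le
      simp only [g]
      linarith [hfb z]
    refine Filter.tendsto_atTop_mono hlow ?_
    refine Filter.tendsto_atTop_add_const_left _ _ ?_
    refine Filter.Tendsto.const_mul_atTop hδ ?_
    exact (Filter.tendsto_pow_atTop two_ne_zero).comp (tendsto_norm_cocompact_atTop)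
  refine ⟨y, fun c => ?_⟩
  -- bound on y c
  have hyb : δ * y c ^ 2 ≤ f 0 - b := by
    have h0 := hy 0
    simp only [g] at h0
    have h1 : y c ^ 2 ≤ ∑ c, y c ^ 2 :=
      Finset.single_le_sum (f := fun c => y c ^ 2) (fun c _ => sq_nonneg _) (Finset.mem_univ c)
    have h2 := mul_le_mul_of_nonneg_left h1 hδ.le
    have h3 := hfb y
    simp at h0
    linarith
  have hyε : 2 * δ * y c ≤ ε := by
    refine le_of_sq_le_sq ?_ hε.le
    nlinarith
  -- derivative
  have hder : HasDerivAt (fun s : ℝ => g (Function.update y c s))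
      ((∑ S ∈ T, w S * (M S c ^ 2 * Real.exp (y c) / Z S y)) - α c + δ * (2 * y c)) (y c) := by
    have hupd : ∀ c', HasDerivAt (fun s : ℝ => Function.update y c s c')
        (if c' = c then 1 else 0) (y c) := by
      intro c'
      by_cases h : c' = c
      · subst h; simpa using hasDerivAt_id' (y c')
      · simpa [h] using hasDerivAt_const (y c) (y c')
    have hZd : ∀ S, HasDerivAt (fun s : ℝ => Z S (Function.update y c s))
        (M S c ^ 2 * Real.exp (y c)) (y c) := by
      intro S
      have : HasDerivAt (fun s : ℝ => Z S (Function.update y c s))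
        (∑ c', M S c' ^ 2 * (Real.exp (Function.update y c (y c) c') * (if c' = c then 1 else 0))) (y c) := by
        refine HasDerivAt.fun_sum fun c' _ => ?_
        exact ((hupd c').exp).const_mul _
      simpa using this
    have h1 : HasDerivAt (fun s : ℝ => ∑ S ∈ T, w S * Real.log (Z S (Function.update y c s)))
        (∑ S ∈ T, w S * (M S c ^ 2 * Real.exp (y c) / Z S y)) (y c) := by
      refine HasDerivAt.fun_sum fun S hS => ?_
      have := (hZd S).log (by rw [Function.update_eq_self]; exact (hZ S hS y).ne')
      rw [Function.update_eq_self] at this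
      exact this.const_mul _
    have h2 : HasDerivAt (fun s : ℝ => ∑ c', α c' * Function.update y c s c') (α c) (y c) := by
      have : HasDerivAt (fun s : ℝ => ∑ c', α c' * Function.update y c s c')
          (∑ c', α c' * (if c' = c then 1 else 0)) (y c) :=
        HasDerivAt.fun_sum fun c' _ => (hupd c').const_mul _
      simpa using this
    have h3 : HasDerivAt (fun s : ℝ => ∑ c', Function.update y c s c' ^ 2) (2 * y c) (y c) := by
      have : HasDerivAt (fun s : ℝ => ∑ c', Function.update y c s c' ^ 2)
          (∑ c', ((2:ℕ):ℝ) * Function.update y c (y c) c' ^ (2-1) * (if c' = c then 1 else 0)) (y c) :=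
        HasDerivAt.fun_sum fun c' _ => (hupd c').fun_pow 2
      simpa using this
    exact (h1.sub h2).add (h3.const_mul δ)
  have hmin : IsLocalMin (fun s : ℝ => g (Function.update y c s)) (y c) := by
    refine Filter.Eventually.of_forall fun s => ?_
    simp only [Function.update_eq_self]
    exact hy _
  have h0 := hmin.hasDerivAt_eq_zero hder
  simp only [Z] at h0
  change α c - ε ≤ _
  linarith

theorem rank_aux {ι C : Type*} [Fintype ι] [Fintype C] [DecidableEq C] (B : ι → C → ℝ)
    (hB : ∀ c, ∑ i, B i c ^ 2 = 1) (K : ℕ) (f : Fin K → C → ℝ)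
    (hf : LinearIndependent ℝ f) (hker : ∀ k i, ∑ c, B i c * f k c = 0) :
    (K : ℝ) ≤ ∑ c, ∑ c', if c = c' then 0 else (∑ i, B i c * B i c') ^ 2 := by
  classical
  let L : (C → ℝ) ≃ₗ[ℝ] EuclideanSpace ℝ C := (WithLp.linearEquiv 2 ℝ (C → ℝ)).symm
  let g : Fin K → EuclideanSpace ℝ C := fun k => L (f k)
  have hg : LinearIndependent ℝ g := hf.map' L.toLinearMap L.ker
  let U := Submodule.span ℝ (Set.range g)
  have hU : Module.finrank ℝ U = K := by
    simpa using finrank_span_eq_card hg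
  let e := (stdOrthonormalBasis ℝ U).reindex (finCongr hU)
  have hkerU : ∀ v ∈ U, ∀ i, ∑ c, B i c * v c = 0 := by
    intro v hv i
    induction hv using Submodule.span_induction with
    | mem x hx => obtain ⟨k, rfl⟩ := hx; exact hker k i
    | zero => simp
    | add x y _ _ hx hy => simp [mul_add, Finset.sum_add_distrib, hx, hy]
    | smul a x _ hx =>
      have : ∑ c, B i c * (a • x) c = a * ∑ c, B i c * x c := by
        rw [Finset.mul_sum]; refine Finset.sum_congr rfl fun c _ => ?_
        simp; ring
      rw [this, hx, mul_zero]
  let E : Fin K → C → ℝ := fun k c => (e k : EuclideanSpace ℝ C) c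
  have hE0 : ∀ k i, ∑ c, B i c * E k c = 0 := fun k i => hkerU _ (e k).2 i
  have hort : ∀ k l, ∑ c, E k c * E l c = if k = l then 1 else 0 := by
    intro k l
    have := orthonormal_iff_ite.1 e.orthonormal k l
    rw [← this]
    simp [E, PiLp.inner_apply, mul_comm]
  let Q : C → C → ℝ := fun c c' => ∑ k, E k c * E k c'
  have hQtr : ∑ c, Q c c = K := by
    simp only [Q]
    rw [Finset.sum_comm]
    simp [hort]
  have hQsq : ∑ c, ∑ c', Q c c' ^ 2 = K := by
    have : ∑ c, ∑ c', Q c c' ^ 2 = ∑ k, ∑ l, (∑ c, E k c * E l c) ^ 2 := by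
      simp only [Q, sq, Finset.sum_mul_sum]
      calc ∑ c, ∑ c', ∑ k, ∑ l, E k c * E k c' * (E l c * E l c')
          = ∑ c, ∑ k, ∑ c', ∑ l, E k c * E k c' * (E l c * E l c') := by
            refine Finset.sum_congr rfl fun c _ => Finset.sum_comm
        _ = ∑ k, ∑ c, ∑ c', ∑ l, E k c * E k c' * (E l c * E l c') := Finset.sum_comm
        _ = ∑ k, ∑ c, ∑ l, ∑ c', E k c * E k c' * (E l c * E l c') := by
            refine Finset.sum_congr rfl fun k _ => Finset.sum_congr rfl fun c _ => Finset.sum_comm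
        _ = ∑ k, ∑ l, ∑ c, ∑ c', E k c * E k c' * (E l c * E l c') := by
            refine Finset.sum_congr rfl fun k _ => Finset.sum_comm
        _ = _ := by
            refine Finset.sum_congr rfl fun k _ => Finset.sum_congr rfl fun l _ =>
              Finset.sum_congr rfl fun c _ => Finset.sum_congr rfl fun c' _ => by ring
    rw [this]
    simp [hort]
  let G : C → C → ℝ := fun c c' => ∑ i, B i c * B i c'
  have hGQ : ∑ c, ∑ c', G c c' * Q c c' = 0 := by
    have : ∑ c, ∑ c', G c c' * Q c c' = ∑ i, ∑ k, (∑ c, B i c * E k c) ^ 2 := by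
      simp only [G, Q, sq, Finset.sum_mul_sum]
      calc ∑ c, ∑ c', ∑ i, ∑ k, B i c * B i c' * (E k c * E k c')
          = ∑ c, ∑ i, ∑ c', ∑ k, B i c * B i c' * (E k c * E k c') := by
            refine Finset.sum_congr rfl fun c _ => Finset.sum_comm
        _ = ∑ i, ∑ c, ∑ c', ∑ k, B i c * B i c' * (E k c * E k c') := Finset.sum_comm
        _ = ∑ i, ∑ c, ∑ k, ∑ c', B i c * B i c' * (E k c * E k c') := by
            refine Finset.sum_congr rfl fun k _ => Finset.sum_congr rfl fun c _ => Finset.sum_comm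
        _ = ∑ i, ∑ k, ∑ c, ∑ c', B i c * B i c' * (E k c * E k c') := by
            refine Finset.sum_congr rfl fun k _ => Finset.sum_comm
        _ = _ := by
            refine Finset.sum_congr rfl fun k _ => Finset.sum_congr rfl fun l _ =>
              Finset.sum_congr rfl fun c _ => Finset.sum_congr rfl fun c' _ => by ring
    rw [this]; simp [hE0]
  let O : C → C → ℝ := fun c c' => if c = c' then 0 else G c c'
  have hOQ : ∑ c, ∑ c', O c c' * Q c c' = -K := by
    have h1 : ∀ c, ∑ c', O c c' * Q c c' = ∑ c', G c c' * Q c c' - Q c c := by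
      intro c
      rw [eq_sub_iff_add_eq]
      have : Q c c = ∑ c', if c = c' then G c c' * Q c c' else 0 := by
        simp [G, ← sq, hB]
      rw [this, ← Finset.sum_add_distrib]
      refine Finset.sum_congr rfl fun c' _ => ?_
      by_cases h : c = c' <;> simp [O, h]
    simp only [h1, Finset.sum_sub_distrib, hGQ, hQtr]; ring
  have hCS := Finset.sum_mul_sq_le_sq_mul_sq (Finset.univ : Finset (C × C))
    (fun q => O q.1 q.2) (fun q => Q q.1 q.2)
  simp only [Fintype.sum_prod_type] at hCS
  rw [hOQ, hQsq] at hCS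
  have hgoal : ∑ c, ∑ c', O c c' ^ 2 = ∑ c, ∑ c', if c = c' then 0 else (∑ i, B i c * B i c') ^ 2 := by
    refine Finset.sum_congr rfl fun c _ => Finset.sum_congr rfl fun c' _ => ?_
    by_cases h : c = c' <;> simp [O, G, h]
  rw [hgoal] at hCS
  rcases Nat.eq_zero_or_pos K with h | h
  · subst h
    simp only [Nat.cast_zero]
    positivity
  · have : (0:ℝ) < K := by exact_mod_cast h
    nlinarith

theorem rank_bound {ι C : Type*} [Fintype ι] [Fintype C] [DecidableEq C] (B : ι → C → ℝ)
    (β : C → ℝ) (hB : ∀ c, ∑ i, B i c ^ 2 = β c) (hβ : ∀ c, 0 < β c) (K : ℕ)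
    (f : Fin K → C → ℝ)
    (hf : LinearIndependent ℝ f) (hker : ∀ k i, ∑ c, B i c * f k c = 0) :
    (K : ℝ) ≤ ∑ c, ∑ c', if c = c' then 0 else (∑ i, B i c * B i c') ^ 2 / (β c * β c') := by
  have hs : ∀ c, 0 < √(β c) := fun c => Real.sqrt_pos.2 (hβ c)
  have hss : ∀ c, √(β c) ^ 2 = β c := fun c => Real.sq_sqrt (hβ c).le
  let D : (C → ℝ) →ₗ[ℝ] (C → ℝ) :=
    { toFun := fun v c => √(β c) * v c
      map_add' := fun v w => by ext c; simp [mul_add]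
      map_smul' := fun a v => by ext c; simp; ring }
  have hD : LinearMap.ker D = ⊥ := by
    rw [LinearMap.ker_eq_bot']
    intro v hv
    ext c
    have := congrFun hv c
    simpa [D, (hs c).ne'] using this
  have h := rank_aux (fun i c => B i c / √(β c)) (fun c => by
    simp only [div_pow, hss, ← Finset.sum_div, hB]
    exact div_self (hβ c).ne') K (fun k => D (f k)) (hf.map' D hD) (fun k i => by
      rw [← hker k i]
      refine Finset.sum_congr rfl fun c _ => ?_
      have := (hs c).ne'
      simp only [D, LinearMap.coe_mk, AddHom.coe_mk]
      field_simp)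
  refine h.trans_eq ?_
  refine Finset.sum_congr rfl fun c _ => Finset.sum_congr rfl fun c' _ => ?_
  split_ifs
  · rfl
  · rw [← hss c, ← hss c', ← mul_pow, ← div_pow, Finset.sum_div]
    simp only [hss]
    congr 1
    refine Finset.sum_congr rfl fun i _ => ?_
    rw [div_mul_div_comm]

theorem design_bound {C : Type*} [Fintype C] [DecidableEq C] (T : Finset (Finset C))
    (w : Finset C → ℝ) (hw : ∀ S ∈ T, 0 < w S) (hcard : ∀ S ∈ T, S.card = 3)
    (M : Finset C → C → ℝ) (hM : ∀ S ∈ T, ∀ c, M S c ≠ 0 ↔ c ∈ S) (P : Finset C)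
    (hpair : ∀ a b, a ≠ b → (∑ S ∈ T, if a ∈ S ∧ b ∈ S then w S else 0) ≤ 1)
    (hpairP : ∀ a ∈ P, ∀ b ∈ P, a ≠ b → 1 ≤ (∑ S ∈ T, if a ∈ S ∧ b ∈ S then w S else 0))
    (hno : ∀ a ∉ P, ∀ b ∉ P, a ≠ b → ∀ S ∈ T, ¬ (a ∈ S ∧ b ∈ S))
    (hcov : ∀ c, ∃ S ∈ T, c ∈ S)
    (K : ℕ) (f : Fin K → C → ℝ) (hf : LinearIndependent ℝ f)
    (hker : ∀ k, ∀ S ∈ T, ∑ c, M S c * f k c = 0) :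
    (K : ℝ) * (P.card - 1) ≤ 6 * (P.card + 2 * (Pᶜ : Finset C).card) := by
  classical
  -- column sums
  have hcol : ∀ x ∈ P, ((P.card : ℝ) - 1) / 6 ≤ (∑ S ∈ T, if x ∈ S then w S else 0) / 3 := by
    intro x hx
    have h1 : ∑ b ∈ Finset.univ.erase x, (∑ S ∈ T, if x ∈ S ∧ b ∈ S then w S else 0)
        = 2 * ∑ S ∈ T, if x ∈ S then w S else 0 := by
      rw [Finset.sum_comm, Finset.mul_sum]
      refine Finset.sum_congr rfl fun S hS => ?_
      by_cases hxS : x ∈ S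
      · simp only [hxS, true_and, if_true]
        rw [← Finset.sum_filter]
        have : (Finset.univ.erase x).filter (fun b => b ∈ S) = S.erase x := by
          ext b; simp
        rw [this, Finset.sum_const, Finset.card_erase_of_mem hxS, hcard S hS]
        simp
      · simp [hxS]
    have h2 : ((P.card : ℝ) - 1) ≤
        ∑ b ∈ Finset.univ.erase x, (∑ S ∈ T, if x ∈ S ∧ b ∈ S then w S else 0) := by
      calc ((P.card : ℝ) - 1) = ∑ b ∈ P.erase x, (1:ℝ) := by
            rw [Finset.sum_const, Finset.card_erase_of_mem hx]
            have : 1 ≤ P.card := Finset.card_pos.2 ⟨x, hx⟩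
            simp [Nat.cast_sub this]
        _ ≤ ∑ b ∈ P.erase x, (∑ S ∈ T, if x ∈ S ∧ b ∈ S then w S else 0) := by
            refine Finset.sum_le_sum fun b hb => ?_
            exact hpairP x hx b (Finset.mem_of_mem_erase hb) (Finset.ne_of_mem_erase hb).symm
        _ ≤ _ := by
            refine Finset.sum_le_sum_of_subset_of_nonneg ?_ ?_
            · exact Finset.erase_subset_erase _ (Finset.subset_univ _)
            · intro b _ _
              refine Finset.sum_nonneg fun S hS => ?_
              split_ifs
              · exact (hw S hS).le
              · exact le_rfl
    rw [h1] at h2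
    linarith
  set L : ℝ := ((P.card : ℝ) - 1) / 6 with hL
  set N : ℝ := (P.card + 2 * (Pᶜ : Finset C).card : ℝ) with hN
  have hN0 : 0 ≤ N := by positivity
  suffices hmain : ∀ ε, 0 < ε → ε < L → (K : ℝ) * (L - ε) ≤ N by
    rcases le_or_gt L 0 with h | h
    · have : (K : ℝ) * L ≤ 0 := mul_nonpos_of_nonneg_of_nonpos (by positivity) h
      have h6 : (P.card : ℝ) - 1 = 6 * L := by rw [hL]; ring
      rw [h6]; nlinarith
    · have : (K : ℝ) * L ≤ N := by
        refine le_of_forall_pos_le_add fun η hη => ?_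
        have hK : (0:ℝ) < K + 1 := by positivity
        have hm := hmain (min (L / 2) (η / (K + 1))) (lt_min (by linarith) (by positivity))
          (lt_of_le_of_lt (min_le_left _ _) (by linarith))
        have h3 : min (L / 2) (η / (K + 1)) ≤ η / (K + 1) := min_le_right _ _
        have h4 : (K : ℝ) * min (L / 2) (η / (K + 1)) ≤ η := by
          calc (K : ℝ) * min (L / 2) (η / (K + 1)) ≤ K * (η / (K + 1)) := by gcongr
            _ = η * (K / (K + 1)) := by ring
            _ ≤ η * 1 := by
              gcongr
              rw [div_le_one hK]; linarith
            _ = η := mul_one _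
        linarith
      have h6 : (P.card : ℝ) - 1 = 6 * L := by rw [hL]; ring
      rw [h6]; linarith
  intro ε hε hεL
  obtain ⟨y, hy⟩ := scaling T w hw hcard M hM ε hε
  let Z : Finset C → ℝ := fun S => ∑ c', M S c' ^ 2 * Real.exp (y c')
  have hZ : ∀ S ∈ T, 0 < Z S := by
    intro S hS
    have : S.Nonempty := by rw [← Finset.card_pos, hcard S hS]; norm_num
    obtain ⟨c, hc⟩ := this
    have hc' := (hM S hS c).2 hc
    refine Finset.sum_pos' (fun c' _ => by positivity) ⟨c, Finset.mem_univ _, by positivity⟩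
  let s : Finset C → C → ℝ := fun S c => M S c ^ 2 * Real.exp (y c) / Z S
  have hs0 : ∀ S ∈ T, ∀ c, 0 ≤ s S c := fun S hS c => by
    have := hZ S hS
    simp only [s]; positivity
  have hs1 : ∀ S ∈ T, ∑ c, s S c = 1 := fun S hS => by
    simp only [s, ← Finset.sum_div]
    exact div_self (hZ S hS).ne'
  have hsS : ∀ S ∈ T, ∀ c, c ∉ S → s S c = 0 := fun S hS c hc => by
    have : M S c = 0 := by by_contra h; exact hc ((hM S hS c).1 h)
    simp [s, this]
  let β : C → ℝ := fun c => ∑ S ∈ T, w S * s S c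
  have hβ : ∀ c, 0 < β c := by
    intro c
    obtain ⟨S, hS, hc⟩ := hcov c
    refine Finset.sum_pos' (fun S hS => mul_nonneg (hw S hS).le (hs0 S hS c)) ⟨S, hS, ?_⟩
    have h1 := hZ S hS
    have h2 := hw S hS
    have h3 := (hM S hS c).2 hc
    simp only [s]; positivity
  have hβP : ∀ x ∈ P, L - ε ≤ β x := fun x hx => by
    have := hy x
    have h2 := hcol x hx
    simp only [β, s, Z]
    linarith
  let σ : Finset C → C → ℝ := fun S c => M S c * Real.exp (y c / 2) / √(Z S)
  have hσ : ∀ S ∈ T, ∀ c, σ S c ^ 2 = s S c := by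
    intro S hS c
    simp only [σ, s, div_pow, mul_pow, Real.sq_sqrt (hZ S hS).le, ← Real.exp_nat_mul]
    congr 3; push_cast; ring_nf
  let B : T → C → ℝ := fun S c => √(w S) * σ S c
  have hrank := rank_bound B β (fun c => by
      have : ∀ S : T, B S c ^ 2 = w S * s S c := fun S => by
        simp only [B, mul_pow, Real.sq_sqrt (hw S S.2).le, hσ S S.2]
      simp only [this, β]
      exact Finset.sum_coe_sort T (fun S => w S * s S c)) hβ K
    (fun k c => f k c * Real.exp (-(y c / 2))) (by
      let D : (C → ℝ) →ₗ[ℝ] (C → ℝ) :=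
        { toFun := fun v c => v c * Real.exp (-(y c / 2))
          map_add' := fun v w => by ext c; simp [add_mul]
          map_smul' := fun a v => by ext c; simp; ring }
      have hD : LinearMap.ker D = ⊥ := by
        rw [LinearMap.ker_eq_bot']
        intro v hv
        ext c
        have := congrFun hv c
        simpa [D] using this
      exact hf.map' D hD) (by
      intro k S
      have : ∑ c, B S c * (f k c * Real.exp (-(y c / 2)))
          = √(w S) / √(Z S) * ∑ c, M S c * f k c := by
        rw [Finset.mul_sum]
        refine Finset.sum_congr rfl fun c _ => ?_
        simp only [B, σ]
        rw [Real.exp_neg]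
        have := Real.exp_ne_zero (y c / 2)
        field_simp
      rw [this, hker k S S.2, mul_zero])
  let H : C → C → ℝ := fun c c' => (∑ S ∈ T, w S * (s S c * s S c')) / (β c * β c')
  have hHnn : ∀ c c', 0 ≤ H c c' := fun c c' => by
    have h1 := hβ c
    have h2 := hβ c'
    refine div_nonneg (Finset.sum_nonneg fun S hS => ?_) (by positivity)
    exact mul_nonneg (hw S hS).le (mul_nonneg (hs0 S hS c) (hs0 S hS c'))
  have hHsymm : ∀ c c', H c c' = H c' c := fun c c' => by
    simp only [H, mul_comm]
  have hterm : ∀ c c', (if c = c' then 0 else (∑ i, B i c * B i c') ^ 2 / (β c * β c')) ≤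
      (if c' ∈ P then H c c' else 0) + (if c ∈ P ∧ c' ∉ P then H c' c else 0) := by
    intro c c'
    have hrhs : 0 ≤ (if c' ∈ P then H c c' else 0) + (if c ∈ P ∧ c' ∉ P then H c' c else 0) := by
      refine add_nonneg ?_ ?_ <;> split_ifs <;> first | exact hHnn _ _ | exact le_rfl
    by_cases h : c = c'
    · rw [if_pos h]; exact hrhs
    rw [if_neg h]
    have hle : (∑ i, B i c * B i c') ^ 2 / (β c * β c') ≤ H c c' := by
      have h1 := hβ c
      have h2 := hβ c'
      refine div_le_div_of_nonneg_right ?_ (by positivity)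
      have e1 : ∑ i, B i c * B i c' = ∑ S ∈ T, (if c ∈ S ∧ c' ∈ S then √(w S) else 0) *
          (√(w S) * (σ S c * σ S c')) := by
        rw [← Finset.sum_coe_sort T]
        refine Finset.sum_congr rfl fun S _ => ?_
        split_ifs with hh
        · simp only [B]; ring
        · have : σ S c * σ S c' = 0 := by
            rw [← sq_eq_zero_iff, mul_pow, hσ S S.2, hσ S S.2]
            by_cases hc : c ∈ (S : Finset C)
            · rw [hsS S S.2 c' (fun h' => hh ⟨hc, h'⟩), mul_zero]
            · rw [hsS S S.2 c hc, zero_mul]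
          rw [zero_mul]
          calc B S c * B S c' = √(w S) * √(w S) * (σ S c * σ S c') := by simp only [B]; ring
            _ = 0 := by rw [this, mul_zero]
      rw [e1]
      refine (Finset.sum_mul_sq_le_sq_mul_sq _ _ _).trans ?_
      have e2 : ∑ S ∈ T, (if c ∈ S ∧ c' ∈ S then √(w S) else 0) ^ 2 ≤ 1 := by
        refine le_trans (le_of_eq ?_) (hpair c c' h)
        refine Finset.sum_congr rfl fun S hS => ?_
        split_ifs
        · exact Real.sq_sqrt (hw S hS).le
        · simp
      have e3 : ∑ S ∈ T, (√(w S) * (σ S c * σ S c')) ^ 2 = ∑ S ∈ T, w S * (s S c * s S c') := by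
        refine Finset.sum_congr rfl fun S hS => ?_
        rw [mul_pow, mul_pow, Real.sq_sqrt (hw S hS).le, hσ S hS, hσ S hS]
      rw [e3]
      refine mul_le_of_le_one_left ?_ e2
      refine Finset.sum_nonneg fun S hS => ?_
      exact mul_nonneg (hw S hS).le (mul_nonneg (hs0 S hS c) (hs0 S hS c'))
    by_cases h1 : c' ∈ P
    · simpa [h1] using hle
    by_cases h2 : c ∈ P
    · simpa [h1, h2, hHsymm c' c] using hle
    · refine hle.trans (le_trans (le_of_eq ?_) hrhs)
      simp only [H]
      rw [Finset.sum_eq_zero, zero_div]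
      intro S hS
      have := hno c h2 c' h1 h S hS
      by_cases hc : c ∈ (S : Finset C)
      · rw [hsS S hS c' (fun h' => this ⟨hc, h'⟩)]; simp
      · rw [hsS S hS c hc]; simp
  have hLε : 0 < L - ε := by linarith
  have hrow : ∀ c, ∑ c' ∈ P, H c c' ≤ 1 / (L - ε) := by
    intro c
    have hc := hβ c
    calc ∑ c' ∈ P, H c c' ≤ ∑ c' ∈ P, (∑ S ∈ T, w S * (s S c * s S c')) / (β c * (L - ε)) := by
          refine Finset.sum_le_sum fun c' hc' => ?_
          refine div_le_div_of_nonneg_left ?_ (by positivity) ?_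
          · refine Finset.sum_nonneg fun S hS => ?_
            exact mul_nonneg (hw S hS).le (mul_nonneg (hs0 S hS c) (hs0 S hS c'))
          · exact mul_le_mul_of_nonneg_left (hβP c' hc') hc.le
      _ = (∑ S ∈ T, w S * s S c * ∑ c' ∈ P, s S c') / (β c * (L - ε)) := by
          rw [← Finset.sum_div, Finset.sum_comm]
          congr 1
          refine Finset.sum_congr rfl fun S _ => ?_
          rw [Finset.mul_sum]
          refine Finset.sum_congr rfl fun c' _ => by ring
      _ ≤ β c / (β c * (L - ε)) := by
          refine div_le_div_of_nonneg_right ?_ (by positivity)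
          refine Finset.sum_le_sum fun S hS => ?_
          refine mul_le_of_le_one_right (mul_nonneg (hw S hS).le (hs0 S hS c)) ?_
          rw [← hs1 S hS]
          exact Finset.sum_le_sum_of_subset_of_nonneg (Finset.subset_univ _)
            fun c' _ _ => hs0 S hS c'
      _ = 1 / (L - ε) := by field_simp
  have hfin : (K : ℝ) ≤ N * (1 / (L - ε)) := by
    refine hrank.trans ?_
    refine (Finset.sum_le_sum fun c _ => Finset.sum_le_sum fun c' _ => hterm c c').trans ?_
    simp only [Finset.sum_add_distrib]
    have a1 : ∑ c, ∑ c', (if c' ∈ P then H c c' else 0) ≤ (Fintype.card C : ℝ) * (1 / (L - ε)) := by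
      have : ∀ c, ∑ c', (if c' ∈ P then H c c' else 0) ≤ 1 / (L - ε) := fun c => by
        rw [← Finset.sum_filter]; simpa using hrow c
      refine (Finset.sum_le_sum fun c _ => this c).trans ?_
      simp
    have a2 : ∑ c, ∑ c', (if c ∈ P ∧ c' ∉ P then H c' c else 0) ≤
        ((Pᶜ : Finset C).card : ℝ) * (1 / (L - ε)) := by
      rw [Finset.sum_comm]
      have : ∀ c', ∑ c, (if c ∈ P ∧ c' ∉ P then H c' c else 0) ≤
          if c' ∈ (Pᶜ : Finset C) then 1 / (L - ε) else 0 := fun c' => by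
        by_cases h : c' ∈ P
        · simp [h]
        · have := hrow c'
          simp only [h, not_false_eq_true, and_true, Finset.mem_compl, if_true]
          rw [← Finset.sum_filter]; simpa using this
      refine (Finset.sum_le_sum fun c _ => this c).trans ?_
      rw [Finset.sum_ite_mem, Finset.univ_inter, Finset.sum_const, nsmul_eq_mul]
    have a3 : (Fintype.card C : ℝ) = P.card + (Pᶜ : Finset C).card := by
      exact_mod_cast (Finset.card_add_card_compl P).symm
    refine (add_le_add a1 a2).trans (le_of_eq ?_)
    rw [a3, hN]; ring
  rw [mul_one_div, le_div_iff₀ hLε] at hfin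
  exact hfin

theorem line_bound {C : Type*} [Fintype C] [DecidableEq C] (Ls : Finset (Finset C))
    (hL3 : ∀ l ∈ Ls, 3 ≤ l.card) (P : Finset C)
    (huniq : ∀ a b, a ≠ b → ∀ l ∈ Ls, ∀ l' ∈ Ls, a ∈ l → b ∈ l → a ∈ l' → b ∈ l' → l = l')
    (hP : ∀ a ∈ P, ∀ b ∈ P, a ≠ b → ∃ l ∈ Ls, a ∈ l ∧ b ∈ l)
    (hno : ∀ a ∉ P, ∀ b ∉ P, a ≠ b → ∀ l ∈ Ls, ¬ (a ∈ l ∧ b ∈ l))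
    (hcov : ∀ c, ∃ l ∈ Ls, c ∈ l)
    (K : ℕ) (f : Fin K → C → ℝ) (hf : LinearIndependent ℝ f)
    (hdep : ∀ l ∈ Ls, ∀ a ∈ l, ∀ b ∈ l, ∀ c ∈ l, a ≠ b → a ≠ c → b ≠ c →
      ∃ x y z : ℝ, x ≠ 0 ∧ y ≠ 0 ∧ z ≠ 0 ∧ ∀ k, x * f k a + y * f k b + z * f k c = 0) :
    (K : ℝ) * (P.card - 1) ≤ 6 * (P.card + 2 * (Pᶜ : Finset C).card) := by
  classical
  let T : Finset (Finset C) := Finset.univ.filter (fun S => S.card = 3 ∧ ∃ l ∈ Ls, S ⊆ l)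
  have hT : ∀ S, S ∈ T ↔ S.card = 3 ∧ ∃ l ∈ Ls, S ⊆ l := fun S => by simp [T]
  let w : Finset C → ℝ := fun S => ∑ l ∈ Ls, if S ⊆ l then 1 / ((l.card : ℝ) - 2) else 0
  have hpos : ∀ l ∈ Ls, (0:ℝ) < (l.card : ℝ) - 2 := fun l hl => by
    have : (3:ℝ) ≤ l.card := by exact_mod_cast hL3 l hl
    linarith
  have hwnn : ∀ S, ∀ l ∈ Ls, 0 ≤ (if S ⊆ l then 1 / ((l.card : ℝ) - 2) else 0) := by
    intro S l hl
    split_ifs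
    · exact (one_div_pos.2 (hpos l hl)).le
    · exact le_rfl
  have hw : ∀ S ∈ T, 0 < w S := by
    intro S hS
    obtain ⟨_, l, hl, hSl⟩ := (hT S).1 hS
    refine Finset.sum_pos' (hwnn S) ⟨l, hl, ?_⟩
    rw [if_pos hSl]
    exact one_div_pos.2 (hpos l hl)
  have hpair : ∀ a b, a ≠ b → (∑ S ∈ T, if a ∈ S ∧ b ∈ S then w S else 0)
      = ((Ls.filter (fun l => a ∈ l ∧ b ∈ l)).card : ℝ) := by
    intro a b hab
    have h1 : (∑ S ∈ T, if a ∈ S ∧ b ∈ S then w S else 0) =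
        ∑ l ∈ Ls, ∑ S ∈ T, if (a ∈ S ∧ b ∈ S) ∧ S ⊆ l then 1 / ((l.card : ℝ) - 2) else 0 := by
      rw [Finset.sum_comm]
      refine Finset.sum_congr rfl fun S _ => ?_
      by_cases h : a ∈ S ∧ b ∈ S
      · simp [h, w]
      · simp [h]
    rw [h1, Finset.card_filter]
    push_cast
    refine Finset.sum_congr rfl fun l hl => ?_
    rw [← Finset.sum_filter]
    split_ifs with h
    · have h2 : T.filter (fun S => (a ∈ S ∧ b ∈ S) ∧ S ⊆ l) =
          (l \ {a, b}).image (fun c => insert c {a, b}) := by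
        ext S
        simp only [Finset.mem_filter, hT, Finset.mem_image, Finset.mem_sdiff, Finset.mem_insert,
          Finset.mem_singleton, not_or]
        constructor
        · rintro ⟨⟨h3, -⟩, ⟨ha, hb⟩, hSl⟩
          have h4 : (S \ {a, b}).card = 1 := by
            rw [Finset.card_sdiff_of_subset]
            · rw [h3, Finset.card_pair hab]
            · intro x hx
              simp only [Finset.mem_insert, Finset.mem_singleton] at hx
              rcases hx with rfl | rfl <;> assumption
          obtain ⟨c, hc⟩ := Finset.card_eq_one.1 h4
          have hcS : c ∈ S \ {a, b} := by rw [hc]; simp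
          simp only [Finset.mem_sdiff, Finset.mem_insert, Finset.mem_singleton, not_or] at hcS
          refine ⟨c, ⟨hSl hcS.1, hcS.2⟩, ?_⟩
          ext x
          have hx : x ∈ S \ {a, b} ↔ x ∈ ({c} : Finset C) := by rw [hc]
          simp only [Finset.mem_sdiff, Finset.mem_insert, Finset.mem_singleton, not_or] at hx ⊢
          constructor
          · rintro (rfl | rfl | rfl)
            · exact hcS.1
            · exact ha
            · exact hb
          · intro hxS
            by_cases h5 : x = a
            · simp [h5]
            by_cases h6 : x = b
            · simp [h6]
            exact Or.inl (hx.1 ⟨hxS, h5, h6⟩)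
        · rintro ⟨c, ⟨hcl, hca, hcb⟩, rfl⟩
          have hsub : insert c {a, b} ⊆ l := by
            intro x hx
            simp only [Finset.mem_insert, Finset.mem_singleton] at hx
            rcases hx with rfl | rfl | rfl
            · exact hcl
            · exact h.1
            · exact h.2
          refine ⟨⟨?_, l, hl, hsub⟩, ⟨by simp, by simp⟩, hsub⟩
          rw [Finset.card_insert_of_notMem (by simp [hca, hcb]), Finset.card_pair hab]
      rw [h2, Finset.sum_const, Finset.card_image_of_injOn]
      · have h3 : ((l \ {a, b}).card : ℝ) = l.card - 2 := by
          rw [Finset.card_sdiff_of_subset]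
          · rw [Finset.card_pair hab, Nat.cast_sub (by linarith [hL3 l hl])]; simp
          · intro x hx
            simp only [Finset.mem_insert, Finset.mem_singleton] at hx
            rcases hx with rfl | rfl
            · exact h.1
            · exact h.2
        rw [nsmul_eq_mul, h3, mul_one_div, div_self (hpos l hl).ne']
      · intro c hc c' hc' hcc
        simp only [Finset.coe_sdiff, Set.mem_sdiff, Finset.mem_coe, Finset.mem_insert,
          Finset.mem_singleton, not_or] at hc hc'
        have : c ∈ insert c' ({a, b} : Finset C) := by
          have hcc2 : insert c ({a, b} : Finset C) = insert c' {a, b} := hcc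
          rw [← hcc2]; simp
        simp only [Finset.mem_insert, Finset.mem_singleton] at this
        rcases this with h | h | h
        · exact h
        · exact absurd h hc.2.1
        · exact absurd h hc.2.2
    · rw [Finset.filter_false_of_mem, Finset.sum_empty]
      rintro S - ⟨⟨ha, hb⟩, hS⟩
      exact h ⟨hS ha, hS hb⟩
  have hMex : ∀ S ∈ T, ∃ m : C → ℝ, (∀ c, m c ≠ 0 ↔ c ∈ S) ∧ ∀ k, ∑ c, m c * f k c = 0 := by
    intro S hS
    obtain ⟨h3, l, hl, hSl⟩ := (hT S).1 hS
    obtain ⟨a, b, c, hab, hac, hbc, rfl⟩ := Finset.card_eq_three.1 h3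
    obtain ⟨x, y, z, hx, hy, hz, h⟩ := hdep l hl a (hSl (by simp)) b (hSl (by simp)) c
      (hSl (by simp)) hab hac hbc
    refine ⟨fun e => if e = a then x else if e = b then y else if e = c then z else 0, ?_, ?_⟩
    · intro e
      simp only [Finset.mem_insert, Finset.mem_singleton]
      by_cases h1 : e = a
      · simp [h1, hx]
      by_cases h2 : e = b
      · simp [h2, hab.symm, hy]
      by_cases h4 : e = c
      · simp [h4, hac.symm, hbc.symm, hz]
      · simp [h1, h2, h4]
    · intro k
      refine Eq.trans ?_ (h k)
      rw [← Finset.sum_subset (Finset.subset_univ ({a, b, c} : Finset C))]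
      · rw [Finset.sum_insert (by simp [hab, hac]), Finset.sum_insert (by simp [hbc]),
          Finset.sum_singleton]
        simp only [hab.symm, hac.symm, hbc.symm, if_true, if_false]
        ring
      · intro e _ he
        simp only [Finset.mem_insert, Finset.mem_singleton, not_or] at he
        simp [he]
  choose! M hM using hMex
  refine design_bound T w hw (fun S hS => ((hT S).1 hS).1) M (fun S hS => (hM S hS).1) P
    ?_ ?_ ?_ ?_ K f hf (fun k S hS => (hM S hS).2 k)
  · intro a b hab
    rw [hpair a b hab]
    have : (Ls.filter (fun l => a ∈ l ∧ b ∈ l)).card ≤ 1 := by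
      rw [Finset.card_le_one]
      intro l hl l' hl'
      rw [Finset.mem_filter] at hl hl'
      exact huniq a b hab l hl.1 l' hl'.1 hl.2.1 hl.2.2 hl'.2.1 hl'.2.2
    exact_mod_cast this
  · intro a ha b hb hab
    rw [hpair a b hab]
    obtain ⟨l, hl, h⟩ := hP a ha b hb hab
    have : 1 ≤ (Ls.filter (fun l => a ∈ l ∧ b ∈ l)).card :=
      Finset.card_pos.2 ⟨l, Finset.mem_filter.2 ⟨hl, h⟩⟩
    exact_mod_cast this
  · intro a ha b hb hab S hS h
    obtain ⟨_, l, hl, hSl⟩ := (hT S).1 hS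
    exact hno a ha b hb hab l hl ⟨hSl h.1, hSl h.2⟩
  · intro c
    obtain ⟨l, hl, hc⟩ := hcov c
    obtain ⟨S, hcS, hSl, hS3⟩ := Finset.exists_subsuperset_card_eq
      (Finset.singleton_subset_iff.2 hc) (by simp) (hL3 l hl)
    exact ⟨S, (hT S).2 ⟨hS3, l, hl, hSl⟩, hcS (by simp)⟩

section Directions

variable {V : Type*} [AddCommGroup V] [Module ℝ V]

/-- normalised direction of the line through two points -/
noncomputable def ndir {n : ℕ} (p : Fin n → V) (φ : V →ₗ[ℝ] ℝ) (x y : Fin n) : V :=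
  (φ (p x - p y))⁻¹ • (p x - p y)

open Classical in
/-- the set of normalised directions -/
noncomputable def ndirs {n : ℕ} (p : Fin n → V) (φ : V →ₗ[ℝ] ℝ) : Finset V :=
  (Finset.univ : Finset (Fin n)).offDiag.image (fun q => ndir p φ q.1 q.2)

theorem mem_ndirs {n : ℕ} (p : Fin n → V) (φ : V →ₗ[ℝ] ℝ) (v : V) :
    v ∈ ndirs p φ ↔ ∃ x y, x ≠ y ∧ ndir p φ x y = v := by
  classical
  simp [ndirs]

theorem smul_ndir {n : ℕ} (p : Fin n → V) (φ : V →ₗ[ℝ] ℝ)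
    (hφ : ∀ x y, x ≠ y → φ (p x - p y) ≠ 0) (x y : Fin n) :
    p x - p y = φ (p x - p y) • ndir p φ x y := by
  by_cases h : x = y
  · subst h; simp
  · rw [ndir, smul_smul, mul_inv_cancel₀ (hφ x y h), one_smul]

theorem phi_ndir {n : ℕ} (p : Fin n → V) (φ : V →ₗ[ℝ] ℝ)
    (hφ : ∀ x y, x ≠ y → φ (p x - p y) ≠ 0) (x y : Fin n) (h : x ≠ y) :
    φ (ndir p φ x y) = 1 := by
  rw [ndir, map_smul, smul_eq_mul, inv_mul_cancel₀ (hφ x y h)]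

theorem ndir_comm {n : ℕ} (p : Fin n → V) (φ : V →ₗ[ℝ] ℝ) (x y : Fin n) :
    ndir p φ x y = ndir p φ y x := by
  rw [ndir, ndir, ← neg_sub (p y) (p x), map_neg, inv_neg, smul_neg, neg_smul, neg_neg]

theorem ndir_eq {n : ℕ} (p : Fin n → V) (φ : V →ₗ[ℝ] ℝ) (x y : Fin n) (v : V) (t : ℝ)
    (ht : t ≠ 0) (hv : φ v = 1) (h : p x - p y = t • v) : ndir p φ x y = v := by
  rw [ndir, h, map_smul, hv, smul_eq_mul, mul_one, smul_smul, inv_mul_cancel₀ ht, one_smul]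

/-- the homogenised coordinates -/
def hcoord {n : ℕ} (p : Fin n → V) (S : Finset V) (x0 : Fin n) : Fin n ⊕ {v // v ∈ S} → ℝ × V
  | Sum.inl z => (1, p z - p x0)
  | Sum.inr v => (0, v.1)

/-- point-line incidence -/
def onl {n : ℕ} (p : Fin n → V) (φ : V →ₗ[ℝ] ℝ) (S : Finset V) (x : Fin n) (v : V) :
    Fin n ⊕ {v // v ∈ S} → Prop
  | Sum.inl z => p z - p x = φ (p z - p x) • v
  | Sum.inr w => w.1 = v

theorem dirs_big {n : ℕ} (p : Fin n → V) (hp : Function.Injective p) (φ : V →ₗ[ℝ] ℝ)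
    (hφ : ∀ x y, x ≠ y → φ (p x - p y) ≠ 0) (hn : 2 ≤ n) (d : ℕ) (x0 : Fin n)
    (e : Fin d → Fin n) (ψ : Fin d → V →ₗ[ℝ] ℝ)
    (hψ : ∀ i j, ψ i (p (e j) - p x0) = if i = j then 1 else 0) :
    ((d : ℝ) + 1) * (n - 1) ≤ 6 * (n + 2 * (ndirs p φ).card) := by
  classical
  set S := ndirs p φ with hS
  let C := Fin n ⊕ {v // v ∈ S}
  let line : Fin n → V → Finset C := fun x v => Finset.univ.filter (fun c => onl p φ S x v c)
  have hline : ∀ x v c, c ∈ line x v ↔ onl p φ S x v c := by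
    intro x v c; simp [line]
  have hlineq : ∀ x z v, onl p φ S x v (Sum.inl z) → line z v = line x v := by
    intro x z v h
    have h : p z - p x = φ (p z - p x) • v := h
    ext c
    rw [hline, hline]
    rcases c with w | w
    · change p w - p z = φ (p w - p z) • v ↔ p w - p x = φ (p w - p x) • v
      have e1 : p w - p x = (p w - p z) + (p z - p x) := by abel
      rw [e1, map_add, add_smul, ← h, add_left_inj]
    · rfl
  have hdirline : ∀ x v a b, φ v = 1 → a ≠ b → onl p φ S x v (Sum.inl a) →
      onl p φ S x v (Sum.inl b) → ndir p φ a b = v := by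
    intro x v a b hv hab ha hb
    have ha : p a - p x = φ (p a - p x) • v := ha
    have hb : p b - p x = φ (p b - p x) • v := hb
    refine ndir_eq p φ a b v (φ (p a - p b)) (hφ a b hab) hv ?_
    have e1 : p a - p b = (p a - p x) - (p b - p x) := by abel
    rw [e1, map_sub, sub_smul, ← ha, ← hb]
  let Ls : Finset (Finset C) := (Finset.univ : Finset (Fin n)).offDiag.image
    (fun q => line q.1 (ndir p φ q.1 q.2))
  have hLs : ∀ l, l ∈ Ls ↔ ∃ x y, x ≠ y ∧ line x (ndir p φ x y) = l := by
    intro l; simp [Ls]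
  have hmemS : ∀ x y, x ≠ y → ndir p φ x y ∈ S := fun x y h =>
    (mem_ndirs p φ _).2 ⟨x, y, h, rfl⟩
  have hself : ∀ x v, onl p φ S x v (Sum.inl x) := by
    intro x v
    change p x - p x = φ (p x - p x) • v
    simp
  have hother : ∀ x y, onl p φ S x (ndir p φ x y) (Sum.inl y) := by
    intro x y
    change p y - p x = φ (p y - p x) • ndir p φ x y
    rw [ndir_comm]
    exact smul_ndir p φ hφ y x
  let P : Finset C := Finset.univ.image Sum.inl
  have hPl : ∀ x : Fin n, (Sum.inl x : C) ∈ P := fun x => by simp [P]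
  have hPr : ∀ v : {v // v ∈ S}, (Sum.inr v : C) ∉ P := fun x => by simp [P]
  have hPc : P.card = n := by
    rw [Finset.card_image_of_injective _ Sum.inl_injective]; simp
  have hPcc : (Pᶜ : Finset C).card = S.card := by
    rw [Finset.card_compl, hPc]
    simp [C]
  let G : Fin (d + 1) → (ℝ × V) →ₗ[ℝ] ℝ :=
    Fin.cons (LinearMap.fst ℝ ℝ V) (fun i => (ψ i).comp (LinearMap.snd ℝ ℝ V))
  let f : Fin (d + 1) → C → ℝ := fun k c => G k (hcoord p S x0 c)
  have hmain := line_bound Ls ?_ P ?_ ?_ ?_ ?_ (d + 1) f ?_ ?_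
  · rw [hPc, hPcc] at hmain
    push_cast at hmain
    exact hmain
  · intro l hl
    obtain ⟨x, y, hxy, rfl⟩ := (hLs l).1 hl
    have h3 : ({Sum.inl x, Sum.inl y, Sum.inr ⟨_, hmemS x y hxy⟩} : Finset C).card = 3 := by
      rw [Finset.card_eq_three]
      exact ⟨_, _, _, fun h => hxy (Sum.inl_injective h), by simp, by simp, rfl⟩
    rw [← h3]
    apply Finset.card_le_card
    intro c hc
    simp only [Finset.mem_insert, Finset.mem_singleton] at hc
    rw [hline]
    rcases hc with rfl | rfl | rfl
    · exact hself _ _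
    · exact hother _ _
    · rfl
  · intro a b hab l hl l' hl' hal hbl hal' hbl'
    obtain ⟨x, y, hxy, rfl⟩ := (hLs l).1 hl
    obtain ⟨x', y', hxy', rfl⟩ := (hLs l').1 hl'
    have hv := phi_ndir p φ hφ x y hxy
    have hv' := phi_ndir p φ hφ x' y' hxy'
    rw [hline] at hal hbl hal' hbl'
    rcases a with a | a <;> rcases b with b | b
    · have hab2 : a ≠ b := fun h => hab (by rw [h])
      have e1 := hdirline _ _ _ _ hv hab2 hal hbl
      have e2 := hdirline _ _ _ _ hv' hab2 hal' hbl'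
      rw [← hlineq _ _ _ hal, ← hlineq _ _ _ hal', ← e1, ← e2]
    · have e1 : b.1 = _ := hbl
      have e2 : b.1 = _ := hbl'
      rw [← hlineq _ _ _ hal, ← hlineq _ _ _ hal', ← e1, ← e2]
    · have e1 : a.1 = _ := hal
      have e2 : a.1 = _ := hal'
      rw [← hlineq _ _ _ hbl, ← hlineq _ _ _ hbl', ← e1, ← e2]
    · have e1 : a.1 = _ := hal
      have e2 : b.1 = _ := hbl
      exact absurd (congrArg Sum.inr (Subtype.ext (e1.trans e2.symm))) hab
  · intro a ha b hb hab
    rcases a with a | a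
    swap
    · exact absurd ha (hPr a)
    rcases b with b | b
    swap
    · exact absurd hb (hPr b)
    have hab2 : a ≠ b := fun h => hab (by rw [h])
    exact ⟨line a (ndir p φ a b), (hLs _).2 ⟨a, b, hab2, rfl⟩, (hline _ _ _).2 (hself _ _),
      (hline _ _ _).2 (hother _ _)⟩
  · rintro a ha b hb hab l hl ⟨hal, hbl⟩
    obtain ⟨x, y, hxy, rfl⟩ := (hLs l).1 hl
    rw [hline] at hal hbl
    rcases a with a | a
    · exact ha (hPl a)
    rcases b with b | b
    · exact hb (hPl b)
    have e1 : a.1 = _ := hal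
    have e2 : b.1 = _ := hbl
    exact absurd (congrArg Sum.inr (Subtype.ext (e1.trans e2.symm))) hab
  · intro c
    rcases c with x | v
    · have : Nontrivial (Fin n) := Fin.nontrivial_iff_two_le.2 hn
      obtain ⟨y, hy⟩ := exists_ne x
      exact ⟨line x (ndir p φ x y), (hLs _).2 ⟨x, y, hy.symm, rfl⟩, (hline _ _ _).2 (hself _ _)⟩
    · obtain ⟨x, y, hxy, h⟩ := (mem_ndirs p φ v.1).1 v.2
      exact ⟨line x (ndir p φ x y), (hLs _).2 ⟨x, y, hxy, rfl⟩, (hline _ _ _).2 h.symm⟩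
  · rw [Fintype.linearIndependent_iff]
    intro g hg
    have hev : ∀ c : C, g 0 * (hcoord p S x0 c).1 +
        ∑ i : Fin d, g i.succ * ψ i (hcoord p S x0 c).2 = 0 := by
      intro c
      have := congrFun hg c
      rw [Finset.sum_apply, Fin.sum_univ_succ] at this
      simpa [f, G] using this
    have h0 : g 0 = 0 := by
      have := hev (Sum.inl x0)
      simpa [hcoord] using this
    intro i
    refine Fin.cases h0 (fun j => ?_) i
    have := hev (Sum.inl (e j))
    simp only [hcoord] at this
    rw [h0] at this
    simpa [hψ, -map_sub] using this
  · intro l hl a ha b hb c hc hab hac hbc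
    obtain ⟨x, y, hxy, rfl⟩ := (hLs l).1 hl
    have hv := phi_ndir p φ hφ x y hxy
    set v := ndir p φ x y with hvdef
    rw [hline] at ha hb hc
    suffices h : ∃ r s t : ℝ, r ≠ 0 ∧ s ≠ 0 ∧ t ≠ 0 ∧
        r • hcoord p S x0 a + s • hcoord p S x0 b + t • hcoord p S x0 c = 0 by
      obtain ⟨r, s, t, hr, hs, ht, h⟩ := h
      refine ⟨r, s, t, hr, hs, ht, fun k => ?_⟩
      have := congrArg (G k) h
      simpa only [map_add, map_smul, smul_eq_mul, map_zero] using this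
    have hinl : ∀ z, onl p φ S x v (Sum.inl z) → p z = p x + φ (p z - p x) • v := by
      intro z hz
      have hz : p z - p x = φ (p z - p x) • v := hz
      rw [← hz]; abel
    have hne : ∀ z w : Fin n, (Sum.inl z : C) ≠ Sum.inl w → φ (p z - p x) - φ (p w - p x) ≠ 0 := by
      intro z w hzw
      have := hφ z w (fun h => hzw (by rw [h]))
      rw [← map_sub]
      simpa using this
    have hrr : ∀ z w : {v // v ∈ S}, (Sum.inr z : C) ≠ Sum.inr w → onl p φ S x v (Sum.inr z) →
        onl p φ S x v (Sum.inr w) → False := by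
      intro z w hzw hz hw
      have e1 : z.1 = v := hz
      have e2 : w.1 = v := hw
      exact hzw (congrArg Sum.inr (Subtype.ext (e1.trans e2.symm)))
    rcases a with a | a <;> rcases b with b | b <;> rcases c with c | c
    · have h1 := hinl a ha
      have h2 := hinl b hb
      have h3 := hinl c hc
      have n1 := hne _ _ hbc
      have n2 := hne _ _ hac.symm
      have n3 := hne _ _ hab
      set A := φ (p a - p x)
      set B := φ (p b - p x)
      set D := φ (p c - p x)
      refine ⟨B - D, D - A, A - B, n1, n2, n3, ?_⟩
      simp only [hcoord]
      rw [h1, h2, h3]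
      ext
      · simp
      · simp only [Prod.snd_add, Prod.smul_snd, Prod.snd_zero]
        module
    · have h1 := hinl a ha
      have h2 := hinl b hb
      have h3 : c.1 = v := hc
      have n3 := hne _ _ hab
      set A := φ (p a - p x)
      set B := φ (p b - p x)
      refine ⟨1, -1, -(A - B), one_ne_zero, by norm_num, neg_ne_zero.2 n3, ?_⟩
      simp only [hcoord]
      rw [h1, h2, h3]
      ext
      · simp
      · simp only [Prod.snd_add, Prod.smul_snd, Prod.snd_zero]
        module
    · have h1 := hinl a ha
      have h2 := hinl c hc
      have h3 : b.1 = v := hb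
      have n3 := hne _ _ hac
      set A := φ (p a - p x)
      set B := φ (p c - p x)
      refine ⟨1, -(A - B), -1, one_ne_zero, neg_ne_zero.2 n3, by norm_num, ?_⟩
      simp only [hcoord]
      rw [h1, h2, h3]
      ext
      · simp
      · simp only [Prod.snd_add, Prod.smul_snd, Prod.snd_zero]
        module
    · exact (hrr _ _ hbc hb hc).elim
    · have h1 := hinl b hb
      have h2 := hinl c hc
      have h3 : a.1 = v := ha
      have n3 := hne _ _ hbc
      set A := φ (p b - p x)
      set B := φ (p c - p x)
      refine ⟨-(A - B), 1, -1, neg_ne_zero.2 n3, one_ne_zero, by norm_num, ?_⟩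
      simp only [hcoord]
      rw [h1, h2, h3]
      ext
      · simp
      · simp only [Prod.snd_add, Prod.smul_snd, Prod.snd_zero]
        module
    · exact (hrr _ _ hac ha hc).elim
    · exact (hrr _ _ hab ha hb).elim
    · exact (hrr _ _ hab ha hb).elim

end Directions

theorem fmin_bound (r : ℕ) : r ^ 2 ≤ 4 * ∑ i ∈ Finset.range r, (1 + min i (r - 1 - i)) := by
  induction r using Nat.twoStepInduction with
  | zero => simp
  | one => simp
  | more r ih _ =>
    have h : ∑ i ∈ Finset.range (r + 2), (1 + min i (r + 2 - 1 - i)) =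
        (∑ i ∈ Finset.range r, (1 + min i (r - 1 - i))) + r + 2 := by
      rw [Finset.sum_range_succ, Finset.sum_range_succ']
      have : ∑ i ∈ Finset.range r, (1 + min (i + 1) (r + 2 - 1 - (i + 1))) =
          ∑ i ∈ Finset.range r, ((1 + min i (r - 1 - i)) + 1) := by
        apply Finset.sum_congr rfl
        intro i hi
        rw [Finset.mem_range] at hi
        omega
      rw [this, Finset.sum_add_distrib]
      simp
    rw [h]
    nlinarith

theorem sum_rank {n : ℕ} (X : Fin n → ℝ) (hX : Function.Injective X) (h : ℕ → ℕ)
    (K : Finset (Fin n)) :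
    ∑ x ∈ K, h (K.filter (fun y => X y < X x)).card = ∑ i ∈ Finset.range K.card, h i := by
  classical
  induction K using Finset.induction_on_max_value X with
  | empty => simp
  | insert a s ha hmax ih =>
    have hlt : ∀ x ∈ s, X x < X a := fun x hx =>
      lt_of_le_of_ne (hmax x hx) (fun h => ha (hX h ▸ hx))
    rw [Finset.sum_insert ha, Finset.card_insert_of_notMem ha, Finset.sum_range_succ, ← ih, add_comm]
    congr 1
    · apply Finset.sum_congr rfl
      intro x hx
      rw [Finset.filter_insert, if_neg (not_lt.2 (hmax x hx))]
    · rw [Finset.filter_insert, if_neg (lt_irrefl _), Finset.filter_true_of_mem hlt]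

theorem class_bound {n : ℕ} (X : Fin n → ℝ) (hX : Function.Injective X)
    (K : Finset (Fin n)) :
    K.card ^ 2 ≤ 4 * ∑ x ∈ K, (1 + min (K.filter (fun y => X y < X x)).card
      (K.filter (fun y => X x < X y)).card) := by
  classical
  have h1 : ∑ x ∈ K, (1 + min (K.filter (fun y => X y < X x)).card
      (K.filter (fun y => X x < X y)).card) =
      ∑ x ∈ K, (fun i => 1 + min i (K.card - 1 - i)) (K.filter (fun y => X y < X x)).card := by
    apply Finset.sum_congr rfl
    intro x hx
    have : K = insert x ((K.filter (fun y => X y < X x)) ∪ (K.filter (fun y => X x < X y))) := by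
      ext y
      simp only [Finset.mem_insert, Finset.mem_union, Finset.mem_filter]
      constructor
      · intro hy
        rcases lt_trichotomy (X y) (X x) with h | h | h
        · exact Or.inr (Or.inl ⟨hy, h⟩)
        · exact Or.inl (hX h)
        · exact Or.inr (Or.inr ⟨hy, h⟩)
      · rintro (rfl | h | h)
        · exact hx
        · exact h.1
        · exact h.1
    have hc := congrArg Finset.card this
    rw [Finset.card_insert_of_notMem (by simp), Finset.card_union_of_disjoint] at hc
    · simp only
      omega
    · rw [Finset.disjoint_left]
      intro y hy hy'
      exact lt_asymm (Finset.mem_filter.1 hy).2 (Finset.mem_filter.1 hy').2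
  rw [h1, sum_rank X hX (fun i => 1 + min i (K.card - 1 - i))]
  exact fmin_bound K.card

/-- slope -/
noncomputable def slp {n : ℕ} (X Y : Fin n → ℝ) (i j : Fin n) : ℝ := (Y i - Y j) / (X i - X j)

theorem slp_comm {n : ℕ} (X Y : Fin n → ℝ) (i j : Fin n) : slp X Y i j = slp X Y j i := by
  rw [slp, slp, ← neg_sub (Y j), ← neg_sub (X j), neg_div_neg_eq]

theorem slp_eq_iff {n : ℕ} (X Y : Fin n → ℝ) (hX : Function.Injective X) (i j : Fin n) (h : i ≠ j)
    (s : ℝ) : slp X Y i j = s ↔ Y i - Y j = s * (X i - X j) := by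
  rw [slp, div_eq_iff (sub_ne_zero.2 (fun e => h (hX e)))]

theorem slp_key {n : ℕ} (X Y : Fin n → ℝ) (x y a : Fin n) (s t : ℝ)
    (hy : Y y - Y x = t * (X y - X x)) (ha : Y a - Y x = s * (X a - X x)) (hya : X y - X a ≠ 0) :
    slp X Y y a = s + (t - s) * ((X y - X x) / (X y - X a)) := by
  rw [slp]
  field_simp
  linear_combination hy - ha

/-- the set of slopes -/
noncomputable def slps {n : ℕ} (X Y : Fin n → ℝ) : Finset ℝ :=
  (Finset.univ : Finset (Fin n)).offDiag.image (fun q => slp X Y q.1 q.2)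

/-- the set of slopes at a point -/
noncomputable def slpx {n : ℕ} (X Y : Fin n → ℝ) (x : Fin n) : Finset ℝ :=
  ((Finset.univ : Finset (Fin n)).erase x).image (fun y => slp X Y x y)

/-- left points -/
noncomputable def lft {n : ℕ} (X Y : Fin n → ℝ) (x : Fin n) (s : ℝ) : Finset (Fin n) :=
  Finset.univ.filter (fun y => Y y - Y x = s * (X y - X x) ∧ X y < X x)

/-- right points -/
noncomputable def rgt {n : ℕ} (X Y : Fin n → ℝ) (x : Fin n) (s : ℝ) : Finset (Fin n) :=
  Finset.univ.filter (fun y => Y y - Y x = s * (X y - X x) ∧ X x < X y)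

theorem slp_card {n : ℕ} (X Y : Fin n → ℝ) (hX : Function.Injective X) (x y : Fin n) (s t : ℝ)
    (hst : t ≠ s) (hxy : X y ≠ X x)
    (hy : Y y - Y x = t * (X y - X x)) (A : Finset (Fin n))
    (hA : ∀ a ∈ A, Y a - Y x = s * (X a - X x) ∧ X y ≠ X a) (T : Finset ℝ) (hs : s ∈ T)
    (hAT : ∀ a ∈ A, slp X Y y a ∈ T) : 1 + A.card ≤ T.card := by
  classical
  have hr : ∀ a ∈ A, (t - s) * ((X y - X x) / (X y - X a)) ≠ 0 := fun a ha =>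
    mul_ne_zero (sub_ne_zero.2 hst) (div_ne_zero (sub_ne_zero.2 hxy) (sub_ne_zero.2 (hA a ha).2))
  have hk : ∀ a ∈ A, slp X Y y a = s + (t - s) * ((X y - X x) / (X y - X a)) := fun a ha =>
    slp_key X Y x y a s t hy (hA a ha).1 (sub_ne_zero.2 (hA a ha).2)
  have hsub : insert s (A.image (slp X Y y)) ⊆ T := by
    intro σ hσ
    rw [Finset.mem_insert, Finset.mem_image] at hσ
    rcases hσ with rfl | ⟨a, ha, rfl⟩
    · exact hs
    · exact hAT a ha
  refine le_trans ?_ (Finset.card_le_card hsub)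
  rw [Finset.card_insert_of_notMem, Finset.card_image_of_injOn, add_comm]
  · intro a ha b hb hab
    have ha : a ∈ A := ha
    have hb : b ∈ A := hb
    rw [hk a ha, hk b hb] at hab
    have h1 := mul_left_cancel₀ (sub_ne_zero.2 hst) (add_left_cancel hab)
    rw [div_eq_div_iff (sub_ne_zero.2 (hA a ha).2) (sub_ne_zero.2 (hA b hb).2)] at h1
    have h2 := mul_left_cancel₀ (sub_ne_zero.2 hxy) h1
    apply hX
    linarith
  · rw [Finset.mem_image]
    rintro ⟨a, ha, h⟩
    rw [hk a ha] at h
    exact hr a ha (by linarith)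

theorem point_bound {n : ℕ} (X Y : Fin n → ℝ) (hX : Function.Injective X) (x : Fin n)
    (hx : 2 ≤ (slpx X Y x).card) :
    ∑ s ∈ slpx X Y x, (1 + min (lft X Y x s).card (rgt X Y x s).card) ≤ (slps X Y).card := by
  classical
  set S := slpx X Y x with hS
  let T : ℝ → Finset ℝ := fun s => (slps X Y).filter (fun σ =>
    (s ≤ σ ∧ ∀ s' ∈ S, s < s' → σ < s') ∨ ((∀ s' ∈ S, s' ≤ s) ∧ ∀ s' ∈ S, σ < s'))
  have hT : ∀ s σ, σ ∈ T s ↔ σ ∈ slps X Y ∧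
    ((s ≤ σ ∧ ∀ s' ∈ S, s < s' → σ < s') ∨ ((∀ s' ∈ S, s' ≤ s) ∧ ∀ s' ∈ S, σ < s')) := by
    intro s σ; simp [T]
  have hdis2 : ∀ s ∈ S, ∀ s' ∈ S, s < s' → Disjoint (T s) (T s') := by
    intro s hs s' hs' hss
    rw [Finset.disjoint_left]
    intro σ h1 h2
    rw [hT] at h1 h2
    rcases h1.2 with ⟨a, b⟩ | ⟨a, b⟩
    · rcases h2.2 with ⟨a', b'⟩ | ⟨a', b'⟩
      · linarith [b s' hs' hss]
      · linarith [b' s hs]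
    · linarith [a s' hs']
  have hdis : (S : Set ℝ).PairwiseDisjoint T := by
    intro s hs s' hs' hne
    rcases lt_or_gt_of_ne hne with h | h
    · exact hdis2 s hs s' hs' h
    · exact (hdis2 s' hs' s hs h).symm
  have hSmem : ∀ s ∈ S, ∃ y, X y ≠ X x ∧ y ≠ x ∧ slp X Y x y = s ∧ Y y - Y x = s * (X y - X x) := by
    intro s hs
    rw [hS, slpx, Finset.mem_image] at hs
    obtain ⟨y, hy, h⟩ := hs
    have hy := Finset.ne_of_mem_erase hy
    refine ⟨y, fun e => hy (hX e), hy, h, ?_⟩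
    rw [slp_comm] at h
    exact (slp_eq_iff X Y hX y x hy s).1 h
  have hmemslps : ∀ i j, i ≠ j → slp X Y i j ∈ slps X Y := by
    intro i j hij
    rw [slps, Finset.mem_image]
    exact ⟨(i, j), by simpa using hij, rfl⟩
  have hcard : ∀ s ∈ S, 1 + min (lft X Y x s).card (rgt X Y x s).card ≤ (T s).card := by
    intro s hs
    obtain ⟨y0, _, hy0, hy0s, _⟩ := hSmem s hs
    have hsT : s ∈ T s := by
      rw [hT]
      refine ⟨hy0s ▸ hmemslps _ _ hy0.symm, Or.inl ⟨le_rfl, fun s' _ h => h⟩⟩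
    by_cases hmax : ∃ s' ∈ S, s < s'
    · obtain ⟨t0, ht0, hst0⟩ := hmax
      have hne : (S.filter (fun t => s < t)).Nonempty := ⟨t0, by simp [ht0, hst0]⟩
      obtain ⟨t, ht, htmin⟩ := Finset.exists_min_image (S.filter (fun t => s < t)) id hne
      rw [Finset.mem_filter] at ht
      obtain ⟨y, hyX, hyx, _, hyt⟩ := hSmem t ht.1
      have hmain : ∀ a, Y a - Y x = s * (X a - X x) →
          0 < (X y - X x) / (X y - X a) → (X y - X x) / (X y - X a) < 1 →
          X y - X a ≠ 0 → slp X Y y a ∈ T s := by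
        intro a ha h1 h2 h3
        have hya : y ≠ a := by rintro rfl; simp at h3
        rw [hT]
        refine ⟨hmemslps _ _ hya, Or.inl ?_⟩
        rw [slp_key X Y x y a s t hyt ha h3]
        have hts : 0 < t - s := sub_pos.2 ht.2
        refine ⟨by nlinarith, fun s' hs' hss' => ?_⟩
        have : t ≤ s' := htmin s' (by simp [hs', hss'])
        nlinarith
      rcases lt_or_gt_of_ne hyX with h | h
      · refine le_trans (Nat.add_le_add_left (min_le_right _ _) 1)
          (slp_card X Y hX x y s t ht.2.ne' hyX hyt (rgt X Y x s) ?_ (T s) hsT ?_)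
        · intro a ha
          simp only [rgt, Finset.mem_filter, Finset.mem_univ, true_and] at ha
          exact ⟨ha.1, by linarith [ha.2] |> fun h => ne_of_lt h⟩
        · intro a ha
          simp only [rgt, Finset.mem_filter, Finset.mem_univ, true_and] at ha
          have h4 : X y - X a < 0 := by linarith
          refine hmain a ha.1 (div_pos_of_neg_of_neg (by linarith) h4) ?_ h4.ne
          rw [div_lt_one_of_neg h4]
          linarith
      · refine le_trans (Nat.add_le_add_left (min_le_left _ _) 1)
          (slp_card X Y hX x y s t ht.2.ne' hyX hyt (lft X Y x s) ?_ (T s) hsT ?_)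
        · intro a ha
          simp only [lft, Finset.mem_filter, Finset.mem_univ, true_and] at ha
          exact ⟨ha.1, by linarith [ha.2] |> fun h => ne_of_gt h⟩
        · intro a ha
          simp only [lft, Finset.mem_filter, Finset.mem_univ, true_and] at ha
          have h4 : 0 < X y - X a := by linarith
          refine hmain a ha.1 (div_pos (by linarith) h4) ?_ h4.ne'
          rw [div_lt_one h4]
          linarith
    · have hmax : ∀ s' ∈ S, s' ≤ s := by
        intro s' hs'
        by_contra h
        exact hmax ⟨s', hs', not_le.1 h⟩
      obtain ⟨t, ht, htmin⟩ := Finset.exists_min_image S id ⟨s, hs⟩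
      have hts : t < s := by
        refine lt_of_le_of_ne (hmax t ht) ?_
        rintro rfl
        obtain ⟨s', hs', hne⟩ := Finset.exists_mem_ne (by omega : 1 < S.card) t
        exact hne (le_antisymm (hmax s' hs') (htmin s' hs'))
      obtain ⟨y, hyX, hyx, _, hyt⟩ := hSmem t ht
      have hmain : ∀ a, Y a - Y x = s * (X a - X x) →
          ((X y - X x) / (X y - X a) < 0 ∨ 1 < (X y - X x) / (X y - X a)) →
          X y - X a ≠ 0 → slp X Y y a ∈ T s := by
        intro a ha h1 h3
        have hya : y ≠ a := by rintro rfl; simp at h3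
        rw [hT]
        refine ⟨hmemslps _ _ hya, ?_⟩
        rw [slp_key X Y x y a s t hyt ha h3]
        rcases h1 with h1 | h1
        · left
          refine ⟨by nlinarith, fun s' hs' hss' => absurd (hmax s' hs') (not_le.2 hss')⟩
        · right
          refine ⟨hmax, fun s' hs' => ?_⟩
          have : t ≤ s' := htmin s' hs'
          nlinarith
      have hXya : ∀ a, Y a - Y x = s * (X a - X x) → X y ≠ X a := by
        intro a ha h
        have := hX h
        subst this
        rw [hyt] at ha
        have := mul_right_cancel₀ (sub_ne_zero.2 hyX) ha
        exact hts.ne this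
      rcases lt_or_gt_of_ne hyX with h | h
      · refine le_trans (Nat.add_le_add_left (min_le_left _ _) 1)
          (slp_card X Y hX x y s t hts.ne hyX hyt (lft X Y x s) ?_ (T s) hsT ?_)
        · intro a ha
          simp only [lft, Finset.mem_filter, Finset.mem_univ, true_and] at ha
          exact ⟨ha.1, hXya a ha.1⟩
        · intro a ha
          simp only [lft, Finset.mem_filter, Finset.mem_univ, true_and] at ha
          refine hmain a ha.1 ?_ (sub_ne_zero.2 (hXya a ha.1))
          rcases lt_or_gt_of_ne (hXya a ha.1) with h5 | h5
          · right
            have h4 : X y - X a < 0 := by linarith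
            rw [one_lt_div_of_neg h4]
            linarith
          · left
            exact div_neg_of_neg_of_pos (by linarith) (by linarith)
      · refine le_trans (Nat.add_le_add_left (min_le_right _ _) 1)
          (slp_card X Y hX x y s t hts.ne hyX hyt (rgt X Y x s) ?_ (T s) hsT ?_)
        · intro a ha
          simp only [rgt, Finset.mem_filter, Finset.mem_univ, true_and] at ha
          exact ⟨ha.1, hXya a ha.1⟩
        · intro a ha
          simp only [rgt, Finset.mem_filter, Finset.mem_univ, true_and] at ha
          refine hmain a ha.1 ?_ (sub_ne_zero.2 (hXya a ha.1))
          rcases lt_or_gt_of_ne (hXya a ha.1) with h5 | h5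
          · left
            exact div_neg_of_pos_of_neg (by linarith) (by linarith)
          · right
            have h4 : 0 < X y - X a := by linarith
            rw [one_lt_div h4]
            linarith
  calc _ ≤ ∑ s ∈ S, (T s).card := Finset.sum_le_sum hcard
    _ = (S.biUnion T).card := (Finset.card_biUnion hdis).symm
    _ ≤ _ := by
      apply Finset.card_le_card
      intro σ hσ
      rw [Finset.mem_biUnion] at hσ
      obtain ⟨s, _, h⟩ := hσ
      exact ((hT s σ).1 h).1

theorem planar {n : ℕ} (X Y : Fin n → ℝ) (hX : Function.Injective X)
    (hx : ∀ x, 2 ≤ (slpx X Y x).card) : n - 1 ≤ 4 * (slps X Y).card := by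
  classical
  rcases Nat.eq_zero_or_pos n with h0 | hpos
  · omega
  have hper : ∀ s : ℝ, ∑ x : Fin n, (Finset.univ.filter (fun y => y ≠ x ∧ slp X Y x y = s)).card ≤
      4 * ∑ x : Fin n, if s ∈ slpx X Y x then
        (1 + min (lft X Y x s).card (rgt X Y x s).card) else 0 := by
    intro s
    let c : Fin n → ℝ := fun x => Y x - s * X x
    rw [← Finset.sum_fiberwise_of_maps_to (s := Finset.univ) (t := Finset.univ.image c) (g := c)
      (fun x hx => Finset.mem_image_of_mem c hx), ← Finset.sum_fiberwise_of_maps_to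
      (s := Finset.univ) (t := Finset.univ.image c) (g := c)
      (f := fun x => if s ∈ slpx X Y x then
        (1 + min (lft X Y x s).card (rgt X Y x s).card) else 0)
      (fun x hx => Finset.mem_image_of_mem c hx), Finset.mul_sum]
    apply Finset.sum_le_sum
    intro γ _
    set K := Finset.univ.filter (fun x => c x = γ) with hK
    have hKm : ∀ x ∈ K, ∀ y, y ∈ K ↔ Y y - Y x = s * (X y - X x) := by
      intro x hxK y
      simp only [hK, Finset.mem_filter, Finset.mem_univ, true_and, c] at hxK ⊢
      rw [← hxK]
      constructor <;> intro h <;> linarith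
    have hdeg : ∀ x ∈ K, Finset.univ.filter (fun y => y ≠ x ∧ slp X Y x y = s) = K.erase x := by
      intro x hxK
      ext y
      rw [Finset.mem_erase, hKm x hxK y, Finset.mem_filter]
      constructor
      · rintro ⟨_, h1, h2⟩
        rw [slp_comm] at h2
        exact ⟨h1, (slp_eq_iff X Y hX y x h1 s).1 h2⟩
      · rintro ⟨h1, h2⟩
        rw [slp_comm]
        exact ⟨Finset.mem_univ _, h1, (slp_eq_iff X Y hX y x h1 s).2 h2⟩
    have e1 : ∑ x ∈ K, (Finset.univ.filter (fun y => y ≠ x ∧ slp X Y x y = s)).card =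
        K.card * (K.card - 1) := by
      rw [Finset.sum_congr rfl (fun x hxK => by rw [hdeg x hxK, Finset.card_erase_of_mem hxK])]
      simp
    rw [e1]
    by_cases h2 : 2 ≤ K.card
    · have e2 : ∑ x ∈ K, (if s ∈ slpx X Y x then
        (1 + min (lft X Y x s).card (rgt X Y x s).card) else 0) =
        ∑ x ∈ K, (1 + min (K.filter (fun y => X y < X x)).card
          (K.filter (fun y => X x < X y)).card) := by
        apply Finset.sum_congr rfl
        intro x hxK
        rw [if_pos]
        · congr 3
          · ext y
            rw [lft, Finset.mem_filter, Finset.mem_filter, hKm x hxK y]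
            simp
          · ext y
            rw [rgt, Finset.mem_filter, Finset.mem_filter, hKm x hxK y]
            simp
        · obtain ⟨y, hy, hne⟩ := Finset.exists_mem_ne (by omega : 1 < K.card) x
          rw [slpx, Finset.mem_image]
          refine ⟨y, by simpa using hne, ?_⟩
          rw [slp_comm]
          exact (slp_eq_iff X Y hX y x hne s).2 ((hKm x hxK y).1 hy)
      rw [e2]
      refine le_trans ?_ (class_bound X hX K)
      rw [sq]
      exact Nat.mul_le_mul_left _ (Nat.sub_le _ _)
    · have : K.card * (K.card - 1) = 0 := by
        have : K.card - 1 = 0 := by omega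
        rw [this, mul_zero]
      omega
  have hsub : ∀ x, slpx X Y x ⊆ slps X Y := by
    intro x s hs
    rw [slpx, Finset.mem_image] at hs
    obtain ⟨y, hy, rfl⟩ := hs
    rw [slps, Finset.mem_image]
    exact ⟨(x, y), by simpa using (Finset.ne_of_mem_erase hy).symm, rfl⟩
  have hA : n * (n - 1) = ∑ s ∈ slps X Y, ∑ x : Fin n,
      (Finset.univ.filter (fun y => y ≠ x ∧ slp X Y x y = s)).card := by
    rw [Finset.sum_comm]
    have : ∀ x : Fin n, ∑ s ∈ slps X Y,
        (Finset.univ.filter (fun y => y ≠ x ∧ slp X Y x y = s)).card = n - 1 := by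
      intro x
      have h1 := Finset.card_eq_sum_card_fiberwise (f := fun y => slp X Y x y)
        (s := Finset.univ.erase x) (t := slps X Y) (by
          intro y hy
          exact hsub x (Finset.mem_image_of_mem _ hy))
      rw [Finset.card_erase_of_mem (Finset.mem_univ x), Finset.card_univ, Fintype.card_fin] at h1
      rw [h1]
      apply Finset.sum_congr rfl
      intro s _
      congr 1
      ext y
      simp
    rw [Finset.sum_congr rfl (fun x _ => this x)]
    simp
  have hB : ∑ s ∈ slps X Y, (4 * ∑ x : Fin n, if s ∈ slpx X Y x then
        (1 + min (lft X Y x s).card (rgt X Y x s).card) else 0) ≤ 4 * (n * (slps X Y).card) := by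
    rw [← Finset.mul_sum, Finset.sum_comm]
    apply Nat.mul_le_mul_left
    calc _ ≤ ∑ x : Fin n, (slps X Y).card := by
          apply Finset.sum_le_sum
          intro x _
          rw [← Finset.sum_filter, Finset.filter_mem_eq_inter, Finset.inter_eq_right.2 (hsub x)]
          exact point_bound X Y hX x (hx x)
      _ = _ := by simp
  have hC := hA.le.trans ((Finset.sum_le_sum (fun s _ => hper s)).trans hB)
  have : n * (n - 1) ≤ n * (4 * (slps X Y).card) := by linarith
  exact Nat.le_of_mul_le_mul_left this hpos

theorem dual_fun {K V ι : Type*} [Field K] [AddCommGroup V] [Module K V] [DecidableEq ι]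
    (g : ι → V) (hg : LinearIndependent K g) :
    ∃ ψ : ι → V →ₗ[K] K, ∀ i j, ψ i (g j) = if i = j then 1 else 0 := by
  have h : ∀ i, ∃ ψ : V →ₗ[K] K, ∀ j, ψ (g j) = if i = j then 1 else 0 := by
    intro i
    obtain ⟨ψ, hψ⟩ := LinearMap.exists_extend ((Finsupp.lapply i).comp hg.repr)
    refine ⟨ψ, fun j => ?_⟩
    have hj : g j ∈ Submodule.span K (Set.range g) := Submodule.subset_span ⟨j, rfl⟩
    have h1 := LinearMap.congr_fun hψ ⟨g j, hj⟩
    have h2 := hg.repr_eq_single j ⟨g j, hj⟩ rfl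
    simp only [LinearMap.comp_apply, Submodule.subtype_apply] at h1
    rw [h1, h2]
    simp [Finsupp.single_apply, eq_comm]
  choose ψ hψ using h
  exact ⟨ψ, hψ⟩

theorem exists_phi {V : Type*} [AddCommGroup V] [Module ℝ V] {n : ℕ} (p : Fin n → V)
    (hp : Function.Injective p) :
    ∃ φ : V →ₗ[ℝ] ℝ, ∀ x y, x ≠ y → φ (p x - p y) ≠ 0 := by
  obtain ⟨φ, hφ⟩ := Module.exists_dual_forall_apply_ne_zero (K := ℝ)
    (fun q : {q : Fin n × Fin n // q.1 ≠ q.2} => p q.1.1 - p q.1.2)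
    (fun q => sub_ne_zero.2 (fun h => q.2 (hp h)))
  exact ⟨φ, fun x y h => hφ ⟨(x, y), h⟩⟩

theorem dirs_small {V : Type*} [AddCommGroup V] [Module ℝ V] {n : ℕ} (p : Fin n → V)
    (φ : V →ₗ[ℝ] ℝ) (hφ : ∀ x y, x ≠ y → φ (p x - p y) ≠ 0)
    (hnc : ¬ ∃ W : AffineSubspace ℝ V, Module.rank ℝ W.direction ≤ 1 ∧ ∀ x, p x ∈ W) :
    n - 1 ≤ 4 * (ndirs p φ).card := by
  classical
  obtain ⟨g, hg⟩ := Module.exists_dual_forall_apply_ne_zero (K := ℝ)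
    (fun q : {q : Fin n × Fin n × Fin n // ndir p φ q.1 q.2.1 - ndir p φ q.1 q.2.2 ≠ 0} =>
      ndir p φ q.1.1 q.1.2.1 - ndir p φ q.1.1 q.1.2.2) (fun q => q.2)
  have hslp : ∀ i j, slp (fun i => φ (p i)) (fun i => g (p i)) i j = g (ndir p φ i j) := by
    intro i j
    rw [slp, ndir, map_smul, map_sub, map_sub, smul_eq_mul, div_eq_inv_mul]
  have hle : (slps (fun i => φ (p i)) (fun i => g (p i))).card ≤ (ndirs p φ).card := by
    have : slps (fun i => φ (p i)) (fun i => g (p i)) ⊆ (ndirs p φ).image g := by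
      intro s hs
      rw [slps, Finset.mem_image] at hs
      obtain ⟨q, hq, rfl⟩ := hs
      rw [hslp]
      apply Finset.mem_image_of_mem
      rw [mem_ndirs]
      exact ⟨q.1, q.2, (Finset.mem_offDiag.1 hq).2.2, rfl⟩
    exact (Finset.card_le_card this).trans Finset.card_image_le
  refine le_trans (planar (fun i => φ (p i)) (fun i => g (p i)) ?_ ?_)
    (Nat.mul_le_mul_left 4 hle)
  · intro x y hxy
    by_contra h
    apply hφ x y h
    rw [map_sub, sub_eq_zero]
    exact hxy
  · intro x
    by_contra hlt
    apply hnc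
    have hv : ∃ v, ∀ y, y ≠ x → ndir p φ x y = v := by
      by_cases hex : ∃ y, y ≠ x
      · obtain ⟨y, hy⟩ := hex
        refine ⟨ndir p φ x y, fun z hz => ?_⟩
        by_contra hne
        apply hlt
        have h1 := hg ⟨(x, z, y), sub_ne_zero.2 hne⟩
        simp only [map_sub] at h1
        rw [Nat.succ_le_iff, Finset.one_lt_card]
        refine ⟨g (ndir p φ x z), ?_, g (ndir p φ x y), ?_, sub_ne_zero.1 h1⟩
        · rw [← hslp, slpx, Finset.mem_image]
          exact ⟨z, by simpa using hz, rfl⟩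
        · rw [← hslp, slpx, Finset.mem_image]
          exact ⟨y, by simpa using hy, rfl⟩
      · exact ⟨0, fun y hy => absurd ⟨y, hy⟩ hex⟩
    obtain ⟨v, hv⟩ := hv
    refine ⟨AffineSubspace.mk' (p x) (Submodule.span ℝ {v}), ?_, ?_⟩
    · rw [AffineSubspace.direction_mk']
      have := rank_span_finset_le (R := ℝ) ({v} : Finset V)
      rw [Finset.coe_singleton] at this
      simpa using this
    · intro y
      rw [AffineSubspace.mem_mk', vsub_eq_sub]
      by_cases hy : y = x
      · subst hy; simp
      · rw [smul_ndir p φ hφ y x, ndir_comm, hv y hy]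
        exact Submodule.smul_mem _ _ (Submodule.mem_span_singleton_self v)

theorem exists_dual_points {V : Type*} [AddCommGroup V] [Module ℝ V] {n : ℕ} (p : Fin n → V)
    (x0 : Fin n) (d : ℕ) (hd : 1 ≤ d)
    (hnc : ¬ ∃ W : AffineSubspace ℝ V,
      Module.rank ℝ W.direction ≤ ((d - 1 : ℕ) : Cardinal) ∧ ∀ x, p x ∈ W) :
    ∃ (e : Fin d → Fin n) (ψ : Fin d → V →ₗ[ℝ] ℝ),
      ∀ i j, ψ i (p (e j) - p x0) = if i = j then 1 else 0 := by
  classical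
  set s : Set V := Set.range (fun x => p x - p x0) with hs
  have hfin : Module.Finite ℝ (Submodule.span ℝ s) :=
    Module.Finite.span_of_finite ℝ (Set.finite_range _)
  obtain ⟨f, hfs, -, hfi⟩ := Submodule.exists_fun_fin_finrank_span_eq ℝ s
  have hrank : d ≤ Module.finrank ℝ (Submodule.span ℝ s) := by
    by_contra hlt
    apply hnc
    refine ⟨AffineSubspace.mk' (p x0) (Submodule.span ℝ s), ?_, ?_⟩
    · rw [AffineSubspace.direction_mk', ← Module.finrank_eq_rank]
      exact_mod_cast (by omega : Module.finrank ℝ (Submodule.span ℝ s) ≤ d - 1)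
    · intro y
      rw [AffineSubspace.mem_mk', vsub_eq_sub]
      exact Submodule.subset_span ⟨y, rfl⟩
  choose e he using hfs
  obtain ⟨ψ, hψ⟩ := dual_fun f hfi
  refine ⟨fun i => e (Fin.castLE hrank i), fun i => ψ (Fin.castLE hrank i), fun i j => ?_⟩
  have := he (Fin.castLE hrank j)
  simp only at this
  rw [this, hψ]
  simp

theorem dirs_bound {V : Type*} [AddCommGroup V] [Module ℝ V] {n : ℕ} (p : Fin n → V)
    (φ : V →ₗ[ℝ] ℝ) (hφ : ∀ x y, x ≠ y → φ (p x - p y) ≠ 0) (hp : Function.Injective p)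
    (d : ℕ) (hd : 2 ≤ d)
    (hnc : ¬ ∃ W : AffineSubspace ℝ V,
      Module.rank ℝ W.direction ≤ ((d - 1 : ℕ) : Cardinal) ∧ ∀ x, p x ∈ W)
    (hn : 4 * (d + 1) ≤ n) : (d : ℝ) * n / 48 ≤ (ndirs p φ).card := by
  have hnR : 4 * ((d : ℝ) + 1) ≤ n := by exact_mod_cast hn
  have hdR : (2 : ℝ) ≤ d := by exact_mod_cast hd
  by_cases h6 : d ≤ 6
  · have h1 := dirs_small p φ hφ (by
      rintro ⟨W, hW, h⟩
      refine hnc ⟨W, hW.trans ?_, h⟩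
      exact_mod_cast (by omega : 1 ≤ d - 1))
    have h2 : (n : ℝ) ≤ 4 * (ndirs p φ).card + 1 := by
      exact_mod_cast (by omega : n ≤ 4 * (ndirs p φ).card + 1)
    have h3 : (d : ℝ) ≤ 6 := by exact_mod_cast h6
    nlinarith
  · obtain ⟨e, ψ, hψ⟩ := exists_dual_points p ⟨0, by omega⟩ d (by omega) hnc
    have h1 := dirs_big p hp φ hφ (by omega) d _ e ψ hψ
    have h3 : (7 : ℝ) ≤ d := by exact_mod_cast (by omega : 7 ≤ d)
    nlinarith

theorem num_bound (d : ℕ) (hd : 2 ≤ d) (μ : ℝ) (hμ0 : 0 < μ) :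
    ∃ n₀ : ℕ, ∀ n : ℕ, n₀ ≤ n → ∀ m j : ℕ, (d : ℝ) * n / 48 ≤ j → m * m ≤ 2 * j + m →
      (d : ℝ) * m + ((1 / 48 : ℝ) * d - μ) * n + 1 ≤ j := by
  set B : ℝ := d + d * (d + 1) / (48 * μ) + 1 with hB
  obtain ⟨n₀, hn₀⟩ := exists_nat_ge ((d * (2 * B + 1) + 1) / μ)
  refine ⟨n₀, fun n hn m j h1 h2 => ?_⟩
  have hdR : (2 : ℝ) ≤ d := by exact_mod_cast hd
  have hnR : (n₀ : ℝ) ≤ n := by exact_mod_cast hn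
  have h2R : (m : ℝ) * m ≤ 2 * j + m := by exact_mod_cast h2
  by_cases hc : (d : ℝ) * m + 1 ≤ μ * n
  · nlinarith
  · rw [not_le] at hc
    have h3 : d * (2 * B + 1) + 1 ≤ μ * n := by
      have := hn₀.trans hnR
      rw [div_le_iff₀ hμ0] at this
      linarith
    have h4 : 2 * B + 1 < m := by
      have : (d : ℝ) * (2 * B + 1) < d * m := by linarith
      exact lt_of_mul_lt_mul_left this (by linarith)
    have hBpos : 0 ≤ d * ((d : ℝ) + 1) / (48 * μ) := by positivity
    have hm1 : (1 : ℝ) ≤ m := by linarith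
    have h5 : (n : ℝ) ≤ (d + 1) * m / μ := by
      rw [le_div_iff₀ hμ0]
      nlinarith
    have h6 : (1 / 48 : ℝ) * d * n ≤ d * (d + 1) / (48 * μ) * m := by
      calc (1 / 48 : ℝ) * d * n ≤ (1 / 48 : ℝ) * d * ((d + 1) * m / μ) := by gcongr
        _ = _ := by field_simp
    have h7 : (d : ℝ) * m + (1 / 48 : ℝ) * d * n + 1 ≤ B * m := by
      rw [hB]; nlinarith
    have h8 : 0 ≤ μ * n := by positivity
    nlinarith

theorem pairs_bound {V : Type*} [AddCommGroup V] [Module ℝ V] (F : Subfield ℝ) {k n m : ℕ}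
    (u : Fin k → V) (p : Fin n → V) (x0 : Fin n) (y : Fin m → Fin n)
    (hy : LinearIndependent F (fun i => p (y i) - p x0))
    (J : Finset (Fin k))
    (hJ : ∀ x y : Fin n, p x ≠ p y → ∃ i ∈ J, ∃ c : F, p x - p y = (c : ℝ) • u i) :
    m * m ≤ 2 * J.card + m := by
  classical
  obtain ⟨ψ, hψ⟩ := dual_fun _ hy
  have hinj : ∀ i j : Fin m, i ≠ j → p (y i) ≠ p (y j) := by
    intro i j hij h
    have h1 := hψ i i
    have h2 := hψ i j
    rw [h] at h1
    rw [h1, if_pos rfl, if_neg hij] at h2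
    exact one_ne_zero h2
  have hex : ∀ q : {q : Fin m × Fin m // q.1 ≠ q.2}, ∃ i : {i // i ∈ J}, ∃ c : F,
      p (y q.1.1) - p (y q.1.2) = (c : ℝ) • u i := by
    intro q
    obtain ⟨i, hi, h⟩ := hJ _ _ (hinj _ _ q.2)
    exact ⟨⟨i, hi⟩, h⟩
  choose ix c hc using hex
  let f : {q : Fin m × Fin m // q.1 ≠ q.2} → {i // i ∈ J} × Bool :=
    fun q => (ix q, decide (q.1.1 < q.1.2))
  have hf : Function.Injective f := by
    intro q q' hqq
    have h1 : ix q = ix q' := congrArg Prod.fst hqq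
    have h2 : decide (q.1.1 < q.1.2) = decide (q'.1.1 < q'.1.2) := congrArg Prod.snd hqq
    have e1 := hc q
    have e2 := hc q'
    rw [← Subfield.smul_def] at e1 e2
    rw [← h1] at e2
    have hcne : ∀ q, c q ≠ 0 := by
      intro q h
      have := hc q
      rw [h] at this
      exact hinj _ _ q.2 (by simpa [sub_eq_zero] using this)
    have e3 : c q' • (p (y q.1.1) - p (y q.1.2)) = c q • (p (y q'.1.1) - p (y q'.1.2)) := by
      rw [e1, e2, smul_comm]
    have hsub : ∀ i a b, ψ i (p (y a) - p (y b)) =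
        (if i = a then 1 else 0) - (if i = b then 1 else 0) := by
      intro i a b
      have : p (y a) - p (y b) = (p (y a) - p x0) - (p (y b) - p x0) := by abel
      rw [this, LinearMap.map_sub (ψ i) (p (y a) - p x0), hψ, hψ]
    have e4 : ∀ i, c q' * ((if i = q.1.1 then 1 else 0) - (if i = q.1.2 then 1 else 0)) =
        c q * ((if i = q'.1.1 then 1 else 0) - (if i = q'.1.2 then 1 else 0)) := by
      intro i
      have := congrArg (ψ i) e3
      rw [map_smul, map_smul, hsub, hsub] at this
      exact this
    have hq := q.2
    have hq' := q'.2
    have a1 : q.1.1 = q'.1.1 ∨ q.1.1 = q'.1.2 := by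
      by_contra h
      rw [not_or] at h
      have := e4 q.1.1
      rw [if_pos rfl, if_neg hq, if_neg h.1, if_neg h.2] at this
      exact hcne q' (by simpa using this)
    have a2 : q.1.2 = q'.1.1 ∨ q.1.2 = q'.1.2 := by
      by_contra h
      rw [not_or] at h
      have := e4 q.1.2
      rw [if_pos rfl, if_neg hq.symm, if_neg h.1, if_neg h.2] at this
      exact hcne q' (by simpa using this)
    rw [decide_eq_decide] at h2
    apply Subtype.ext
    apply Prod.ext
    · omega
    · omega
  have hcard := Fintype.card_le_of_injective f hf
  have h1 : Fintype.card {q : Fin m × Fin m // q.1 ≠ q.2} = m * m - m := by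
    rw [Fintype.card_subtype]
    have : (Finset.univ.filter (fun q : Fin m × Fin m => q.1 ≠ q.2)) =
        (Finset.univ : Finset (Fin m)).offDiag := by
      ext q; simp
    rw [this, Finset.offDiag_card]
    simp
  rw [h1, Fintype.card_prod, Fintype.card_coe, Fintype.card_bool] at hcard
  omega

universe u

/-- **Lemma 3.1** (with `b = 1/48`). Let `d ≥ 2` and `0 < μ < 1`. For all
sufficiently large `n` the following holds. Let `F` be a subfield of `ℝ`, `V` a
real vector space, `u₁, …, u_k ∈ V` nonzero vectors, and `p₁, …, p_n ∈ V`
distinct vectors not all lying in a common `(d−1)`-dimensional affine subspace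
of `V`. If every difference `p_x − p_y` lies in the `F`-span of some single
`u_i`, then there is a subset `I ⊆ {1, …, k}` such that `u_ℓ` lies in the
`F`-span of `{u_i : i ∈ I}` for at least `d·|I| + (d/48 − μ)·n + 1` indices
`ℓ`. -/
theorem lemma_3_1 (d : ℕ) (hd : 2 ≤ d) (μ : ℝ) (hμ0 : 0 < μ) (hμ1 : μ < 1) :
    ∃ n₀ : ℕ, ∀ n : ℕ, n₀ ≤ n →
      ∀ (V : Type u) [AddCommGroup V] [Module ℝ V],
      ∀ (F : Subfield ℝ) (k : ℕ) (u : Fin k → V) (p : Fin n → V),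
        (∀ i, u i ≠ 0) →
        Function.Injective p →
        (¬ ∃ W : AffineSubspace ℝ V,
            Module.rank ℝ W.direction ≤ ((d - 1 : ℕ) : Cardinal) ∧ ∀ x, p x ∈ W) →
        (∀ x y : Fin n, ∃ i : Fin k, ∃ c : F, p x - p y = (c : ℝ) • u i) →
        ∃ I : Finset (Fin k),
          (d : ℝ) * I.card + ((1 / 48 : ℝ) * d - μ) * n + 1 ≤
            ({ℓ : Fin k | ∃ c : Fin k → ℝ, (∀ i, c i ∈ F) ∧
                (∀ i ∉ I, c i = 0) ∧ u ℓ = ∑ i, c i • u i} : Set (Fin k)).ncard := by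
  classical
  obtain ⟨n₁, hn₁⟩ := num_bound d hd μ hμ0
  refine ⟨max n₁ (4 * (d + 1)), fun n hn V _ _ F k u p hu hp hnc hdiff => ?_⟩
  have hn1 : n₁ ≤ n := (le_max_left _ _).trans hn
  have hn2 : 4 * (d + 1) ≤ n := (le_max_right _ _).trans hn
  let x0 : Fin n := ⟨0, by omega⟩
  let J : Finset (Fin k) := Finset.univ.filter (fun i => ∃ x y : Fin n, x ≠ y ∧
    ∃ c : F, p x - p y = (c : ℝ) • u i)
  have hJ : ∀ i, i ∈ J ↔ ∃ x y : Fin n, x ≠ y ∧ ∃ c : F, p x - p y = (c : ℝ) • u i := by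
    intro i; simp [J]
  have hcne : ∀ (x y : Fin n) (i : Fin k) (c : F), x ≠ y → p x - p y = (c : ℝ) • u i →
      (c : ℝ) ≠ 0 := by
    intro x y i c hxy h hc
    rw [hc, zero_smul, sub_eq_zero] at h
    exact hxy (hp h)
  have hJex : ∀ x y : Fin n, x ≠ y → ∃ i ∈ J, ∃ c : F, p x - p y = (c : ℝ) • u i := by
    intro x y hxy
    obtain ⟨i, c, h⟩ := hdiff x y
    exact ⟨i, (hJ i).2 ⟨x, y, hxy, c, h⟩, c, h⟩
  -- directions
  obtain ⟨φ, hφ⟩ := exists_phi p hp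
  have hdir := dirs_bound p φ hφ hp d hd hnc hn2
  have hdJ : (ndirs p φ).card ≤ J.card := by
    have hsub : ndirs p φ ⊆ J.image (fun i => (φ (u i))⁻¹ • u i) := by
      intro v hv
      obtain ⟨x, y, hxy, rfl⟩ := (mem_ndirs p φ v).1 hv
      obtain ⟨i, hi, c, h⟩ := hJex x y hxy
      rw [Finset.mem_image]
      refine ⟨i, hi, ?_⟩
      have hc := hcne x y i c hxy h
      rw [ndir, h, map_smul, smul_eq_mul, smul_smul, mul_inv, mul_comm (c : ℝ)⁻¹, mul_assoc,
        inv_mul_cancel₀ hc, mul_one]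
    exact (Finset.card_le_card hsub).trans Finset.card_image_le
  -- the span over the subfield
  have hfin : ∀ s : Set V, s.Finite → Module.Finite F (Submodule.span F s) := fun s hs =>
    Module.Finite.span_of_finite F hs
  set sJ : Set V := u '' (J : Set (Fin k)) with hsJ
  set sP : Set V := Set.range (fun x => p x - p x0) with hsP
  have hspan : Submodule.span F sJ = Submodule.span F sP := by
    apply le_antisymm
    · rw [Submodule.span_le]
      rintro _ ⟨i, hi, rfl⟩
      obtain ⟨x, y, hxy, c, h⟩ := (hJ i).1 hi
      have hc : c ≠ 0 := fun h0 => hcne x y i c hxy h (by rw [h0]; rfl)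
      have h1 : u i = c⁻¹ • ((p x - p x0) - (p y - p x0)) := by
        rw [sub_sub_sub_cancel_right, h, ← Subfield.smul_def, smul_smul, inv_mul_cancel₀ hc,
          one_smul]
      rw [h1]
      exact Submodule.smul_mem _ _ (Submodule.sub_mem _ (Submodule.subset_span ⟨x, rfl⟩)
        (Submodule.subset_span ⟨y, rfl⟩))
    · rw [Submodule.span_le]
      rintro _ ⟨x, rfl⟩
      by_cases hx : x = x0
      · subst hx
        simp
      · obtain ⟨i, hi, c, h⟩ := hJex x x0 hx
        simp only
        rw [h, ← Subfield.smul_def]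
        exact Submodule.smul_mem _ _ (Submodule.subset_span ⟨i, hi, rfl⟩)
  have hfJ := hfin sJ (Set.toFinite _)
  have hfP := hfin sP (Set.finite_range _)
  obtain ⟨f, hfs, hfspan, hfi⟩ := Submodule.exists_fun_fin_finrank_span_eq F sJ
  obtain ⟨g, hgs, -, hgi⟩ := Submodule.exists_fun_fin_finrank_span_eq F sP
  choose y hy using hgs
  have hgy : g = fun i => p (y i) - p x0 := by
    funext i; exact (hy i).symm
  rw [hgy] at hgi
  have hpairs := pairs_bound F u p x0 y hgi J (fun x y h => hJex x y (fun e => h (by rw [e])))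
  rw [← hspan] at hpairs
  choose ix hixJ hix using hfs
  have hixinj : Function.Injective ix := by
    intro a b hab
    apply hfi.injective
    rw [← hix, ← hix, hab]
  refine ⟨Finset.univ.image ix, ?_⟩
  have hIc : (Finset.univ.image ix).card = Module.finrank F (Submodule.span F sJ) := by
    rw [Finset.card_image_of_injective _ hixinj]; simp
  rw [hIc]
  refine (hn₁ n hn1 _ J.card (hdir.trans (by exact_mod_cast hdJ)) hpairs).trans ?_
  have hsub : (J : Set (Fin k)) ⊆ {ℓ : Fin k | ∃ c : Fin k → ℝ, (∀ i, c i ∈ F) ∧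
      (∀ i ∉ Finset.univ.image ix, c i = 0) ∧ u ℓ = ∑ i, c i • u i} := by
    intro ℓ hℓ
    have h1 : u ℓ ∈ Submodule.span F (Set.range f) := by
      rw [hfspan]
      exact Submodule.subset_span ⟨ℓ, hℓ, rfl⟩
    obtain ⟨a, ha⟩ := (Submodule.mem_span_range_iff_exists_fun F).1 h1
    refine ⟨fun j => ∑ i, if ix i = j then (a i : ℝ) else 0, ?_, ?_, ?_⟩
    · intro j
      refine F.sum_mem (fun i _ => ?_)
      split_ifs
      · exact (a i).2
      · exact F.zero_mem
    · intro j hj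
      apply Finset.sum_eq_zero
      intro i _
      rw [if_neg]
      rintro rfl
      exact hj (Finset.mem_image_of_mem _ (Finset.mem_univ _))
    · rw [← ha]
      simp only [Finset.sum_smul]
      rw [Finset.sum_comm]
      apply Finset.sum_congr rfl
      intro i _
      simp only [ite_smul, zero_smul]
      rw [Finset.sum_ite_eq, if_pos (Finset.mem_univ _), hix, Subfield.smul_def]
  have := Set.ncard_le_ncard hsub (Set.toFinite _)
  rw [Set.ncard_coe_finset] at this
  exact_mod_cast this
end
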